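/- arXiv:1803.07963 — 8 statements merged into one kernel-verified Lean document; each statement's English description precedes it below -/
import Mathlib

section
/- For every integer k ≥ 1, GR_k(P_9) = 3k + 6. -/
/-!
The upper bound is proved with a weight `w j` for every colour `j`: a set of `3 + max w + ∑ w`
vertices without rainbow triangle contains, in some colour `j`, a path on `2 * w j + 3` vertices
(`not_avoids`). For `P₉` all weights are `3`. The individual weights make an induction on the number
of vertices possible.

Consider a smallest counterexample `S`, and a module `A` of it, that is, a proper nonempty subset to
which every outside vertex sends edges of one colour only. Some colour `j` joins `A` to at least
`w j + 1` vertices (`exists_color_of_module`). Otherwise lower every `w j` by the number of vertices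
joined to `A` in colour `j`; by minimality `A` contains a path for the lower weights, and alternating
between `A` and the outside vertices prolongs it to a forbidden one. Moreover, recolouring all of `A`
in this colour `j` creates no forbidden path. This is a closure property in the style of Bondy and
Chvátal: two vertices with `w + 1` common neighbours may be joined by an edge
without creating a path on `2w + 3` vertices (`closure_edge`, `closure_set`).

By Gallai's theorem (`gallai_cut`), among any three colours one, say `g`, is disconnected. Its
components are modules, so they can be recoloured one after the other, which eliminates colour `g`
(`exists_eliminate`). Thus at most two colours may be assumed, and the theorem of Gerencsér and
Gyárfás applies (`two_color`). It is proved by taking a longest red path and covering the vertices off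
it by two blue paths through interior vertices of the red one, which are then merged
(`exists_two_paths`, `blue_of_longest`).

For the lower bound, join three new vertices for each further colour to everything before them
(`lower`).
-/

/-- A Gallai coloring: an edge coloring of the complete graph on `Fin N` with colors
from `Fin k` containing no rainbow triangle. -/
def IsGallai {N k : ℕ} (c : Sym2 (Fin N) → Fin k) : Prop :=
  ∀ x y z : Fin N, x ≠ y → y ≠ z → x ≠ z →
    c s(x, y) = c s(y, z) ∨ c s(y, z) = c s(x, z) ∨ c s(x, y) = c s(x, z)

/-- The coloring `c` of the complete graph on `Fin N` contains a copy of the graph `H`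
all of whose edges have color `i`. -/
def HasMonoCopy {N k V : ℕ} (c : Sym2 (Fin N) → Fin k)
    (H : SimpleGraph (Fin V)) (i : Fin k) : Prop :=
  ∃ f : Fin V → Fin N, Function.Injective f ∧ ∀ u v, H.Adj u v → c s(f u, f v) = i

/-- Every Gallai k-coloring of the complete graph on `N` vertices contains a
monochromatic copy of `(H i)` in color `i` for some color `i`. -/
def GallaiRamseyProp {k : ℕ} (H : Fin k → Σ V : ℕ, SimpleGraph (Fin V)) (N : ℕ) : Prop :=
  ∀ c : Sym2 (Fin N) → Fin k, IsGallai c → ∃ i : Fin k, HasMonoCopy c (H i).2 i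

/-- The matching of size `n`: the graph on `2n` vertices consisting of `n` pairwise
vertex-disjoint edges. -/
def matchingGraph (n : ℕ) : SimpleGraph (Fin (2 * n)) :=
  SimpleGraph.fromRel (fun u v => (u : ℕ) / 2 = (v : ℕ) / 2)

namespace GRP9

variable {V : Type*}

/-! ### Paths -/

/-- `HasPath E S n`: some path on at least `n` vertices, all lying in `S`, has every pair of
consecutive vertices related by `E`. A path is the duplicate-free list of its vertices. -/
def HasPath (E : V → V → Prop) (S : Finset V) (n : ℕ) : Prop :=
  ∃ l : List V, l.Nodup ∧ l.IsChain E ∧ (∀ x ∈ l, x ∈ S) ∧ n ≤ l.length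

lemma HasPath.mono {E E' : V → V → Prop} {S S' : Finset V} {n m : ℕ} (h : HasPath E S n)
    (hE : ∀ x y, E x y → E' x y) (hS : S ⊆ S') (hn : m ≤ n) : HasPath E' S' m := by
  obtain ⟨l, h1, h2, h3, h4⟩ := h
  exact ⟨l, h1, h2.imp hE, fun x hx => hS (h3 x hx), hn.trans h4⟩

lemma HasPath.exact {E : V → V → Prop} {S : Finset V} {n : ℕ} (h : HasPath E S n) :
    ∃ l : List V, l.Nodup ∧ l.IsChain E ∧ (∀ x ∈ l, x ∈ S) ∧ l.length = n := by
  obtain ⟨l, h1, h2, h3, h4⟩ := h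
  exact ⟨l.take n, h1.sublist (List.take_sublist _ _), h2.take n,
    fun x hx => h3 x (List.mem_of_mem_take hx), by simp [h4]⟩

/-- `IsP E p s t`: the list `p` is a path from `s` to `t` along `E`. -/
def IsP (E : V → V → Prop) (p : List V) (s t : V) : Prop :=
  p.Nodup ∧ p.IsChain E ∧ p.head? = some s ∧ p.getLast? = some t

lemma IsP.single (E : V → V → Prop) (s : V) : IsP E [s] s s := by
  simp [IsP]

lemma IsP.rev {E : V → V → Prop} (hE : ∀ x y, E x y → E y x) {p : List V} {s t : V}
    (h : IsP E p s t) : IsP E p.reverse t s := by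
  obtain ⟨h1, h2, h3, h4⟩ := h
  refine ⟨by simpa, ?_, by simpa, by simpa⟩
  rw [List.isChain_reverse]
  exact h2.imp fun a b => hE a b

lemma IsP.join {E : V → V → Prop} {p q : List V} {s t s' t' : V}
    (hp : IsP E p s t) (hq : IsP E q s' t') (h : E t s') (hd : ∀ x ∈ p, x ∉ q) :
    IsP E (p ++ q) s t' := by
  obtain ⟨h1, h2, h3, h4⟩ := hp
  obtain ⟨k1, k2, k3, k4⟩ := hq
  refine ⟨?_, ?_, by simp [h3], by simp [k4]⟩
  · rw [List.nodup_append]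
    exact ⟨h1, k1, fun a ha b hb hab => hd a ha (hab ▸ hb)⟩
  · rw [List.isChain_append]
    refine ⟨h2, k2, ?_⟩
    simp [h4, k3, h]

lemma IsP.mem_head {E : V → V → Prop} {p : List V} {s t : V} (h : IsP E p s t) : s ∈ p :=
  List.mem_of_mem_head? h.2.2.1

lemma IsP.mem_last {E : V → V → Prop} {p : List V} {s t : V} (h : IsP E p s t) : t ∈ p :=
  List.mem_of_mem_getLast? h.2.2.2

lemma IsP.hasPath {E : V → V → Prop} {p : List V} {s t : V} (h : IsP E p s t) {S : Finset V}
    (hS : ∀ x ∈ p, x ∈ S) {n : ℕ} (hn : n ≤ p.length) : HasPath E S n :=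
  ⟨p, h.1, h.2.1, hS, hn⟩

/-- A path with an end in `A` can be prolonged by alternating between `R` and `A`, when `R` is
completely joined to `A` and both sets have enough vertices off the path. -/
lemma exists_alternating [DecidableEq V] {E : V → V → Prop} {A R : Finset V}
    (hE : ∀ a ∈ A, ∀ x ∈ R, E a x ∧ E x a) (hd : Disjoint A R) :
    ∀ (n : ℕ) (l : List V) (s t : V), IsP E l s t → s ∈ A → (∀ x ∈ l, x ∈ A ∪ R) →
      n ≤ (A \ l.toFinset).card → n ≤ (R \ l.toFinset).card →
      HasPath E (A ∪ R) (l.length + 2 * n) := by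
  intro n
  induction n with
  | zero =>
    intro l s t h _ hl _ _
    exact h.hasPath hl (by simp)
  | succ n ih =>
    intro l s t h hs hl hA hR
    obtain ⟨y, hy⟩ : (A \ l.toFinset).Nonempty := Finset.card_pos.1 (by omega)
    obtain ⟨x, hx⟩ : (R \ l.toFinset).Nonempty := Finset.card_pos.1 (by omega)
    simp only [Finset.mem_sdiff, List.mem_toFinset] at hx hy
    have hxA : x ∉ A := fun hxA => Finset.disjoint_left.1 hd hxA hx.1
    have hyR : y ∉ R := fun hyR => Finset.disjoint_left.1 hd hy.1 hyR
    have hyx : y ≠ x := fun h => hxA (h ▸ hy.1)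
    have h1 : IsP E ([y] ++ ([x] ++ l)) y t := by
      refine (IsP.single E y).join ((IsP.single E x).join h (hE _ hs _ hx.1).2 ?_)
        (hE _ hy.1 _ hx.1).1 ?_
      · simp [hx.2]
      · simp [hy.2, hyx]
    have h2 := ih _ y t h1 hy.1 ?_ ?_ ?_
    · refine h2.mono (fun _ _ h => h) (le_refl _) ?_
      simp only [List.length_append, List.length_singleton]
      omega
    · intro z hz
      simp only [List.cons_append, List.nil_append, List.mem_cons] at hz
      rcases hz with rfl | rfl | hz
      · exact Finset.mem_union_left _ hy.1
      · exact Finset.mem_union_right _ hx.1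
      · exact hl _ hz
    · have : A \ ([y] ++ ([x] ++ l)).toFinset = (A \ l.toFinset).erase y := by
        ext z; simp; grind
      rw [this, Finset.card_erase_of_mem (by simp [hy])]
      omega
    · have : R \ ([y] ++ ([x] ++ l)).toFinset = (R \ l.toFinset).erase x := by
        ext z; simp; grind
      rw [this, Finset.card_erase_of_mem (by simp [hx])]
      omega

/-! ### Closure -/

/-- A list without two consecutive members of `R`, not ending in `R`, has at most half of its
entries in `R`. -/
lemma count_or [DecidableEq V] (R : Finset V) : ∀ B : List V,
    (∃ C D z z', B = C ++ z' :: z :: D ∧ z ∈ R ∧ z' ∈ R) ∨ (∃ C z, B = C ++ [z] ∧ z ∈ R) ∨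
      2 * B.countP (· ∈ R) ≤ B.length
  | [] => by simp
  | [x] => by
    by_cases hx : x ∈ R
    · exact Or.inr (Or.inl ⟨[], x, rfl, hx⟩)
    · simp [hx]
  | x :: y :: B => by
    by_cases hx : x ∈ R
    · by_cases hy : y ∈ R
      · exact Or.inl ⟨[], B, y, x, rfl, hy, hx⟩
      · rcases count_or R B with ⟨C, D, z, z', h, h'⟩ | ⟨C, z, h, h'⟩ | h
        · exact Or.inl ⟨x :: y :: C, D, z, z', by simp [h], h'⟩
        · exact Or.inr (Or.inl ⟨x :: y :: C, z, by simp [h], h'⟩)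
        · right; right
          rw [List.countP_cons_of_pos (by simpa), List.countP_cons_of_neg (by simpa)]
          simp only [List.length_cons]
          omega
    · rcases count_or R (y :: B) with ⟨C, D, z, z', h, h'⟩ | ⟨C, z, h, h'⟩ | h
      · exact Or.inl ⟨x :: C, D, z, z', by simp [h], h'⟩
      · exact Or.inr (Or.inl ⟨x :: C, z, by simp [h], h'⟩)
      · right; right
        rw [List.countP_cons_of_neg (by simpa), List.length_cons]
        omega

/-- If the starting vertex `u` of a path is joined to all of `R`, the path can be rearranged to
start in `R` (by reversing an initial segment), unless `R` is sparse on it. -/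
lemma rotate_or [DecidableEq V] {E : V → V → Prop} (hE : ∀ x y, E x y → E y x) {R : Finset V}
    {u : V} (hu : ∀ x ∈ R, E u x) (huR : u ∉ R) {B : List V} {t : V} (h : IsP E (u :: B) u t) :
    (∃ p s' t', IsP E p s' t' ∧ s' ∈ R ∧ p.Perm (u :: B)) ∨
      2 * (u :: B).countP (· ∈ R) + 1 ≤ (u :: B).length := by
  rcases count_or R B with ⟨C, D, z, z', rfl, hz, hz'⟩ | ⟨C, z, rfl, hz⟩ | h'
  · left
    refine ⟨(u :: C ++ [z']).reverse ++ z :: D, z', t, ?_, hz', ?_⟩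
    · obtain ⟨h1, h2, h3, h4⟩ := h
      have e : u :: (C ++ z' :: z :: D) = (u :: C ++ [z']) ++ z :: D := by simp
      rw [e] at h1 h2 h4
      rw [List.nodup_append] at h1
      have a1 : IsP E (u :: C ++ [z']) u z' := ⟨h1.1, h2.left_of_append, by simp,
        by rw [List.getLast?_append]; simp⟩
      have a2 : IsP E (z :: D) z t := ⟨h1.2.1, h2.right_of_append, by simp, by
        rw [List.getLast?_append] at h4
        rw [← h4]; simp [List.getLast?_cons]⟩
      refine (a1.rev hE).join a2 (hu _ hz) ?_
      intro x hx hx'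
      exact h1.2.2 x (List.mem_reverse.1 hx) x hx' rfl
    · have e : u :: (C ++ z' :: z :: D) = (u :: C ++ [z']) ++ z :: D := by simp
      rw [e]
      exact (List.reverse_perm _).append_right _
  · left
    have := h.rev hE
    refine ⟨_, _, _, this, ?_, List.reverse_perm _⟩
    have h4 := h.2.2.2
    rw [← List.cons_append, List.getLast?_append] at h4
    simp at h4
    exact h4 ▸ hz
  · right
    simp only [List.countP_cons, huR, List.length_cons]
    simp
    omega

/-- A path along `E` together with the edge `uv` either avoids the new edge, or consists of two
`E`-paths joined by it. -/
lemma split_edge {E : V → V → Prop} {u v : V} {L : List V} (hn : L.Nodup)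
    (hc : L.IsChain (fun x y => E x y ∨ (x = u ∧ y = v) ∨ (x = v ∧ y = u))) :
    L.IsChain E ∨ ∃ P Q s t, L = P ++ s :: t :: Q ∧ ((s = u ∧ t = v) ∨ (s = v ∧ t = u)) ∧
      (P ++ [s]).IsChain E ∧ (t :: Q).IsChain E := by
  by_cases hL : L.IsChain E
  · exact Or.inl hL
  right
  rw [List.isChain_iff_forall_rel_of_append_cons_cons] at hL
  push Not at hL
  obtain ⟨s, t, P, Q, rfl, hst⟩ := hL
  have e : P ++ s :: t :: Q = (P ++ [s]) ++ t :: Q := by simp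
  have h0 := hc
  rw [List.isChain_append_cons_cons] at h0
  have h1 : (s = u ∧ t = v) ∨ (s = v ∧ t = u) := h0.2.1.resolve_left hst
  rw [e, List.nodup_append] at hn
  refine ⟨P, Q, s, t, rfl, h1, ?_, ?_⟩
  · refine h0.1.imp_of_mem_imp ?_
    intro x y hx hy hxy
    have := hn.2.2 x hx t (by simp)
    have := hn.2.2 y hy t (by simp)
    grind
  · refine h0.2.2.imp_of_mem_imp ?_
    intro x y hx hy hxy
    have := hn.2.2 s (by simp) x hx
    have := hn.2.2 s (by simp) y hy
    grind

/-- A closure property in the style of Bondy and Chvátal: if `u` and `v` have at least `w + 1` common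
neighbours, then adding the edge `uv` does not create a path on `2w + 3` vertices. -/
lemma closure_edge [DecidableEq V] {E : V → V → Prop} (hE : ∀ x y, E x y → E y x) {S R : Finset V}
    {u v : V} {w : ℕ} (hRS : R ⊆ S) (hu : ∀ x ∈ R, E u x) (hv : ∀ x ∈ R, E v x)
    (huR : u ∉ R) (hvR : v ∉ R) (hw : w + 1 ≤ R.card)
    (h : HasPath (fun x y => E x y ∨ (x = u ∧ y = v) ∨ (x = v ∧ y = u)) S (2 * w + 3)) :
    HasPath E S (2 * w + 3) := by
  obtain ⟨L, hn, hc, hS, hlen⟩ := h.exact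
  rcases split_edge hn hc with hL | ⟨P, Q, s, t, rfl, hst, c1, c2⟩
  · exact ⟨L, hn, hL, hS, hlen.ge⟩
  have hs : (∀ x ∈ R, E s x) ∧ s ∉ R := by rcases hst with ⟨rfl, rfl⟩ | ⟨rfl, rfl⟩ <;> simp_all
  have ht : (∀ x ∈ R, E t x) ∧ t ∉ R := by rcases hst with ⟨rfl, rfl⟩ | ⟨rfl, rfl⟩ <;> simp_all
  have e : P ++ s :: t :: Q = (P ++ [s]) ++ t :: Q := by simp
  rw [e] at hn hS hlen
  rw [List.nodup_append] at hn
  have p1 : ∃ t', IsP E (s :: P.reverse) s t' := by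
    have : IsP E (P ++ [s]) ((P ++ [s]).head (by simp)) s :=
      ⟨hn.1, c1, List.head?_eq_some_head _, by simp⟩
    have := this.rev hE
    simp only [List.reverse_append, List.reverse_cons, List.reverse_nil, List.nil_append,
      List.singleton_append] at this
    exact ⟨_, this⟩
  obtain ⟨s', p1⟩ := p1
  have p2 : IsP E (t :: Q) t ((t :: Q).getLast (by simp)) :=
    ⟨hn.2.1, c2, by simp, List.getLast?_eq_some_getLast _⟩
  have m1 : (s :: P.reverse).Perm (P ++ [s]) := by
    have := List.reverse_perm (P ++ [s])
    simpa using this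
  have hd : ∀ x ∈ s :: P.reverse, x ∉ t :: Q := fun x hx hx' =>
    hn.2.2 x (m1.mem_iff.1 hx) x hx' rfl
  have l1 := m1.length_eq
  rw [List.length_append] at hlen
  have hS1 : ∀ x ∈ s :: P.reverse, x ∈ S := fun x hx =>
    hS x (List.mem_append_left _ (m1.mem_iff.1 hx))
  have hS2 : ∀ x ∈ t :: Q, x ∈ S := fun x hx => hS x (List.mem_append_right _ hx)
  rcases rotate_or hE hs.1 hs.2 p1 with ⟨p, z, z', hp, hz, hpm⟩ | k1
  · refine ((hp.rev hE).join p2 (hE _ _ (ht.1 _ hz)) ?_).hasPath ?_ ?_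
    · intro x hx
      exact hd x (hpm.mem_iff.1 (List.mem_reverse.1 hx))
    · intro x hx
      rcases List.mem_append.1 hx with hx | hx
      · exact hS1 x (hpm.mem_iff.1 (List.mem_reverse.1 hx))
      · exact hS2 x hx
    · have := hpm.length_eq
      rw [List.length_append, List.length_reverse]
      omega
  rcases rotate_or hE ht.1 ht.2 p2 with ⟨p, z, z', hp, hz, hpm⟩ | k2
  · refine ((p1.rev hE).join hp (hs.1 _ hz) ?_).hasPath ?_ ?_
    · intro x hx hx'
      exact hd x (List.mem_reverse.1 hx) (hpm.mem_iff.1 hx')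
    · intro x hx
      rcases List.mem_append.1 hx with hx | hx
      · exact hS1 x (List.mem_reverse.1 hx)
      · exact hS2 x (hpm.mem_iff.1 hx)
    · have := hpm.length_eq
      rw [List.length_append, List.length_reverse]
      omega
  by_cases hR : ∃ z ∈ R, z ∉ s :: P.reverse ∧ z ∉ t :: Q
  · -- a common neighbour off the path replaces the edge `st` by a path of length two
    obtain ⟨z, hz, z1, z2⟩ := hR
    refine ((p1.rev hE).join ((IsP.single E z).join p2 (hE _ _ (ht.1 _ hz)) ?_)
      (hs.1 _ hz) ?_).hasPath ?_ ?_
    · intro x hx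
      rw [List.mem_singleton.1 hx]
      exact z2
    · intro x hx hx'
      rw [List.mem_reverse] at hx
      rcases List.mem_append.1 hx' with h | h
      · exact z1 (List.mem_singleton.1 h ▸ hx)
      · exact hd x hx h
    · intro x hx
      rcases List.mem_append.1 hx with hx | hx
      · exact hS1 x (List.mem_reverse.1 hx)
      rcases List.mem_append.1 hx with hx | hx
      · rw [List.mem_singleton.1 hx]
        exact hRS hz
      · exact hS2 x hx
    · simp only [List.length_append, List.length_reverse, List.length_singleton]
      omega
  · exfalso
    push Not at hR
    have : R ⊆ ((s :: P.reverse ++ t :: Q).filter (· ∈ R)).toFinset := by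
      intro z hz
      have := hR z hz
      rw [List.mem_toFinset, List.mem_filter, List.mem_append]
      exact ⟨by tauto, by simpa⟩
    have := (Finset.card_le_card this).trans (List.toFinset_card_le _)
    rw [← List.countP_eq_length_filter, List.countP_append] at this
    omega

/-- Iterated closure: all pairs of vertices of `A` may be joined without creating a path on `2w + 3`
vertices, once `A` is completely joined to at least `w + 1` further vertices. -/
lemma closure_set [DecidableEq V] {E : V → V → Prop} (hE : ∀ x y, E x y → E y x) {S A R : Finset V}
    {w : ℕ} (hRS : R ⊆ S) (hd : Disjoint A R) (hA : ∀ a ∈ A, ∀ x ∈ R, E a x) (hw : w + 1 ≤ R.card)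
    (h : HasPath (fun x y => E x y ∨ (x ∈ A ∧ y ∈ A)) S (2 * w + 3)) :
    HasPath E S (2 * w + 3) := by
  have key : ∀ F : Finset (V × V), F ⊆ A ×ˢ A →
      HasPath (fun x y => E x y ∨ (x, y) ∈ F ∨ (y, x) ∈ F) S (2 * w + 3) →
      HasPath E S (2 * w + 3) := by
    intro F
    induction F using Finset.induction_on with
    | empty => intro _ h; simpa using h
    | insert e F _ ih =>
      intro hF h
      obtain ⟨u, v⟩ := e
      have huv := hF (Finset.mem_insert_self _ _)
      rw [Finset.mem_product] at huv
      refine ih ((Finset.subset_insert _ _).trans hF) ?_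
      refine closure_edge (R := R) (u := u) (v := v) ?_ hRS (fun x hx => Or.inl (hA _ huv.1 x hx))
        (fun x hx => Or.inl (hA _ huv.2 x hx)) (Finset.disjoint_left.1 hd huv.1)
        (Finset.disjoint_left.1 hd huv.2) hw ?_
      · intro x y hxy
        rcases hxy with h | h | h
        · exact Or.inl (hE _ _ h)
        · exact Or.inr (Or.inr h)
        · exact Or.inr (Or.inl h)
      · refine h.mono ?_ (le_refl _) le_rfl
        intro x y hxy
        simp only [Finset.mem_insert, Prod.mk.injEq] at hxy
        tauto
  refine key _ (le_refl _) (h.mono ?_ (le_refl _) le_rfl)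
  intro x y hxy
  simp only [Finset.mem_product]
  tauto


/-! ### Two colours -/

/-- Two disjoint `B`-paths with all four ends in `Y`, covering `Y` and using `n = |Y| - 2` vertices of
`M`. With three paths at hand, two of their ends have a common neighbour in the next pair of
consecutive entries of `M`, so that these two paths can be merged. -/
lemma exists_two_paths [DecidableEq V] {B : V → V → Prop} (hB : ∀ x y, B x y → B y x) :
    ∀ (n : ℕ) (M : List V) (Y : Finset V), M.Nodup → (∀ x ∈ M, x ∉ Y) →
      M.IsChain (fun x x' => ∀ y ∈ Y, B y x ∨ B y x') → 2 * n ≤ M.length → Y.card = n + 2 →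
      ∃ p q s t s' t', IsP B p s t ∧ IsP B q s' t' ∧ s ∈ Y ∧ t ∈ Y ∧ s' ∈ Y ∧ t' ∈ Y ∧
        (∀ x ∈ p, x ∉ q) ∧ (∀ x ∈ p, x ∈ Y ∨ x ∈ M) ∧ (∀ x ∈ q, x ∈ Y ∨ x ∈ M) ∧
        p.length + q.length = 2 * n + 2 := by
  intro n
  induction n with
  | zero =>
    intro M Y _ _ _ _ hY
    obtain ⟨y, y', hne, rfl⟩ := Finset.card_eq_two.1 hY
    refine ⟨[y], [y'], y, y, y', y', IsP.single _ _, IsP.single _ _, ?_⟩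
    simp [hne]
  | succ n ih =>
    intro M Y hM hMY hc hlen hY
    obtain ⟨x, x', M, rfl⟩ : ∃ x x' M', M = x :: x' :: M' := by
      match M, hlen with
      | x :: x' :: M', _ => exact ⟨x, x', M', rfl⟩
      | [x], h => simp at h; omega
      | [], h => simp at h
    obtain ⟨y, hy⟩ : Y.Nonempty := Finset.card_pos.1 (by omega)
    rw [List.isChain_cons_cons] at hc
    obtain ⟨hxx, hc⟩ := hc
    have hcM : M.IsChain (fun x x' => ∀ y ∈ Y, B y x ∨ B y x') := hc.tail
    obtain ⟨p, q, s, t, s', t', hp, hq, hs, ht, hs', ht', hd, hpY, hqY, hl⟩ :=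
      ih M (Y.erase y) (by simp_all) (fun z hz => by simp_all)
        (hcM.imp fun _ _ h z hz => h z (Finset.mem_of_mem_erase hz))
        (by simp at hlen; omega) (by rw [Finset.card_erase_of_mem hy]; omega)
    simp only [List.nodup_cons, List.mem_cons, not_or] at hM
    have hxp : ∀ z, (z = x ∨ z = x') → z ∉ p ∧ z ∉ q ∧ z ≠ y := by
      intro z hz
      have hzM : z ∉ M := by rcases hz with rfl | rfl <;> tauto
      have hzY : z ∉ Y := hMY z (by simp; tauto)
      refine ⟨fun h => ?_, fun h => ?_, fun h => hzY (h ▸ hy)⟩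
      · rcases hpY z h with h | h
        · exact hzY (Finset.mem_of_mem_erase h)
        · exact hzM h
      · rcases hqY z h with h | h
        · exact hzY (Finset.mem_of_mem_erase h)
        · exact hzM h
    have hyM : y ∉ M := fun h => hMY y (by simp [h]) hy
    have hyp : y ∉ p := fun h => by
      rcases hpY y h with h | h
      · simp at h
      · exact hyM h
    have hyq : y ∉ q := fun h => by
      rcases hqY y h with h | h
      · simp at h
      · exact hyM h
    have hpY' : ∀ z ∈ p, z ∈ Y ∨ z ∈ x :: x' :: M := fun z hz => by
      rcases hpY z hz with h | h
      · exact Or.inl (Finset.mem_of_mem_erase h)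
      · right; simp [h]
    have hqY' : ∀ z ∈ q, z ∈ Y ∨ z ∈ x :: x' :: M := fun z hz => by
      rcases hqY z hz with h | h
      · exact Or.inl (Finset.mem_of_mem_erase h)
      · right; simp [h]
    have hs := Finset.mem_of_mem_erase hs
    have ht := Finset.mem_of_mem_erase ht
    have hs' := Finset.mem_of_mem_erase hs'
    have ht' := Finset.mem_of_mem_erase ht'
    -- of the three ends `y`, `s`, `s'` two have a common neighbour `z` in the pair
    have key : ∃ z, (z = x ∨ z = x') ∧ ((B y z ∧ B z s) ∨ (B y z ∧ B z s') ∨ (B s z ∧ B z s')) := by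
      have h1 := hxx y hy
      have h2 := hxx s hs
      have h3 := hxx s' hs'
      have := hB s
      have := hB s'
      grind
    obtain ⟨z, hz, hzB⟩ := key
    obtain ⟨hz1, hz2, hz3⟩ := hxp z hz
    have hzm : z ∈ x :: x' :: M := by simp; tauto
    have hP := IsP.single B y
    have hZ := IsP.single B z
    rcases hzB with ⟨b1, b2⟩ | ⟨b1, b2⟩ | ⟨b1, b2⟩
    · refine ⟨[y] ++ ([z] ++ p), q, y, t, s', t', hP.join (hZ.join hp b2 (by simp [hz1])) b1
        (by simp [hyp, Ne.symm hz3]), hq, hy, ht, hs', ht', ?_, ?_, hqY', by simp; omega⟩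
      · intro w hw
        simp only [List.cons_append, List.nil_append, List.mem_cons] at hw
        rcases hw with rfl | rfl | hw
        exacts [hyq, hz2, hd _ hw]
      · intro w hw
        simp only [List.cons_append, List.nil_append, List.mem_cons] at hw
        rcases hw with rfl | rfl | hw
        exacts [Or.inl hy, Or.inr hzm, hpY' _ hw]
    · refine ⟨p, [y] ++ ([z] ++ q), s, t, y, t', hp, hP.join (hZ.join hq b2 (by simp [hz2])) b1
        (by simp [hyq, Ne.symm hz3]), hs, ht, hy, ht', ?_, hpY', ?_, by simp; omega⟩
      · intro w hw hw'
        simp only [List.cons_append, List.nil_append, List.mem_cons] at hw'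
        rcases hw' with rfl | rfl | hw'
        exacts [hyp hw, hz1 hw, hd _ hw hw']
      · intro w hw
        simp only [List.cons_append, List.nil_append, List.mem_cons] at hw
        rcases hw with rfl | rfl | hw
        exacts [Or.inl hy, Or.inr hzm, hqY' _ hw]
    · refine ⟨p.reverse ++ ([z] ++ q), [y], t, t', y, y, (hp.rev hB).join (hZ.join hq b2
        (by simp [hz2])) b1 ?_, hP, ht, ht', hy, hy, ?_, ?_, by simp [hy], by simp; omega⟩
      · intro w hw hw'
        rw [List.mem_reverse] at hw
        simp only [List.cons_append, List.nil_append, List.mem_cons] at hw'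
        rcases hw' with rfl | hw'
        exacts [hz1 hw, hd _ hw hw']
      · intro w hw hw'
        rw [List.mem_singleton] at hw'
        subst hw'
        simp only [List.cons_append, List.nil_append, List.mem_cons, List.mem_append,
          List.mem_reverse] at hw
        rcases hw with hw | hw | hw
        exacts [hyp hw, hz3 hw.symm, hyq hw]
      · intro w hw
        simp only [List.cons_append, List.nil_append, List.mem_cons, List.mem_append,
          List.mem_reverse] at hw
        rcases hw with hw | rfl | hw
        exacts [hpY' _ hw, Or.inr hzm, hqY' _ hw]

/-- A longest path `Q` along `E`, seen from a vertex `y` off the path: `y` is not joined to the ends of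
`Q`, nor to two consecutive vertices of `Q`. -/
lemma not_adj_of_longest {E : V → V → Prop} (hE : ∀ x y, E x y → E y x) {S : Finset V} {Q : List V}
    (hn : Q.Nodup) (hc : Q.IsChain E) (hS : ∀ x ∈ Q, x ∈ S)
    (hmax : ¬ HasPath E S (Q.length + 1)) {y : V} (hy : y ∈ S) (hyQ : y ∉ Q) :
    (∀ s ∈ Q.head?, ¬ E y s) ∧ (∀ t ∈ Q.getLast?, ¬ E t y) ∧
      Q.IsChain (fun x x' => ¬ E y x ∨ ¬ E y x') := by
  refine ⟨fun s hs h => hmax ⟨y :: Q, ?_, ?_, ?_, by simp⟩,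
    fun t ht h => hmax ⟨Q ++ [y], ?_, ?_, ?_, by simp⟩, ?_⟩
  · simp [hn, hyQ]
  · rw [List.isChain_cons]
    exact ⟨fun z hz => by rwa [Option.mem_unique hz hs], hc⟩
  · intro x hx
    rcases List.mem_cons.1 hx with rfl | hx
    exacts [hy, hS _ hx]
  · rw [List.nodup_append]
    exact ⟨hn, by simp, fun a ha b hb hab => hyQ (by simp_all)⟩
  · rw [List.isChain_append]
    refine ⟨hc, by simp, fun z hz w hw => ?_⟩
    rw [Option.mem_unique hz ht]
    simp at hw
    exact hw ▸ h
  · intro x hx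
    rcases List.mem_append.1 hx with hx | hx
    exacts [hS _ hx, List.mem_singleton.1 hx ▸ hy]
  · rw [List.isChain_iff_forall_rel_of_append_cons_cons]
    intro x x' P R hQ
    by_contra hcon
    push Not at hcon
    subst hQ
    refine hmax ⟨P ++ x :: y :: x' :: R, ?_, ?_, ?_, by simp⟩
    · have : (P ++ x :: y :: x' :: R).Perm (y :: (P ++ x :: x' :: R)) := by
        have := List.perm_middle (a := y) (l₁ := P ++ [x]) (l₂ := x' :: R)
        simpa using this
      rw [this.nodup_iff]
      simp only [List.nodup_cons]
      exact ⟨hyQ, hn⟩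
    · rw [List.isChain_append_cons_cons] at hc ⊢
      refine ⟨hc.1, hE _ _ hcon.1, ?_⟩
      rw [List.isChain_cons_cons]
      exact ⟨hcon.2, hc.2.2⟩
    · intro z hz
      by_cases hzy : z = y
      · exact hzy ▸ hy
      · exact hS z (by simp at hz ⊢; tauto)

/-- A longest red path on `2a + 2` vertices with `b + 1` vertices off it, or on `2a + 1` vertices with
`b + 2` vertices off it, yields a blue path on `2b + 3` vertices. -/
lemma blue_of_longest [DecidableEq V] {E : V → V → Prop} (hE : ∀ x y, E x y → E y x) {S : Finset V}
    {Q : List V} (hn : Q.Nodup) (hc : Q.IsChain E) (hS : ∀ x ∈ Q, x ∈ S)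
    (hmax : ¬ HasPath E S (Q.length + 1)) {a b : ℕ} (hab : b ≤ a)
    (hQ : (Q.length = 2 * a + 2 ∧ b + 1 + Q.length ≤ S.card) ∨
      (Q.length = 2 * a + 1 ∧ b + 2 + Q.length ≤ S.card)) :
    HasPath (fun x y => ¬ E x y) S (2 * b + 3) := by
  have hB : ∀ x y, ¬ E x y → ¬ E y x := fun x y h h' => h (hE _ _ h')
  have hY : S.card = (S \ Q.toFinset).card + Q.length := by
    rw [← List.toFinset_card_of_nodup hn, Finset.card_sdiff_add_card_eq_card]
    intro x hx
    exact hS x (List.mem_toFinset.1 hx)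
  set Y := S \ Q.toFinset with hYdef
  have hYm : ∀ y ∈ Y, y ∈ S ∧ y ∉ Q := fun y hy => by simpa [hYdef] using hy
  have hends : ∀ y ∈ Y, (∀ s ∈ Q.head?, ¬ E y s) ∧ (∀ t ∈ Q.getLast?, ¬ E t y) ∧
      Q.IsChain (fun x x' => ¬ E y x ∨ ¬ E y x') := fun y hy =>
    not_adj_of_longest hE hn hc hS hmax (hYm y hy).1 (hYm y hy).2
  have hchain : Q.IsChain (fun x x' => ∀ y ∈ Y, ¬ E y x ∨ ¬ E y x') := by
    rw [List.isChain_iff_forall_rel_of_append_cons_cons]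
    intro x x' P R hPR y hy
    have := (hends y hy).2.2
    rw [List.isChain_iff_forall_rel_of_append_cons_cons] at this
    exact this hPR
  clear_value Y
  -- the case of a single-vertex path, where `a = b = 0`
  by_cases hQ1 : Q.length = 1
  · obtain ⟨x, rfl⟩ := List.length_eq_one_iff.1 hQ1
    obtain ⟨Z, hZY, hZ⟩ := Finset.exists_subset_card_eq (s := Y) (n := 2) (by simp at hQ; omega)
    obtain ⟨y, y', hne, rfl⟩ := Finset.card_eq_two.1 hZ
    have hy := hZY (Finset.mem_insert_self _ _)
    have hy' := hZY (Finset.mem_insert_of_mem (Finset.mem_singleton_self _))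
    refine ⟨[y, x, y'], ?_, ?_, ?_, by simp at hQ ⊢; omega⟩
    · have := (hYm y hy).2
      have := (hYm y' hy').2
      simp_all
      tauto
    · have := (hends y hy).1 x (by simp)
      have := (hends y' hy').2.1 x (by simp)
      simp_all
    · have := (hYm y hy).1
      have := (hYm y' hy').1
      simp_all
  obtain ⟨x1, M, xq, rfl⟩ : ∃ x1 M xq, Q = x1 :: (M ++ [xq]) := by
    match Q with
    | [] => simp at hQ
    | x :: Q' =>
      have : Q' ≠ [] := by rintro rfl; simp at hQ1
      exact ⟨x, Q'.dropLast, Q'.getLast this, by rw [List.dropLast_append_getLast]⟩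
  have h1 : ∀ y ∈ Y, ¬ E y x1 := fun y hy => (hends y hy).1 x1 (by simp)
  have hq : ∀ y ∈ Y, ¬ E xq y := fun y hy => (hends y hy).2.1 xq (by
    rw [← List.cons_append, List.getLast?_append]; simp)
  have hcM : M.IsChain (fun x x' => ∀ y ∈ Y, ¬ E y x ∨ ¬ E y x') :=
    hchain.tail.left_of_append
  rw [List.nodup_cons, List.nodup_append] at hn
  simp only [List.mem_append, not_or, List.mem_singleton] at hn
  obtain ⟨⟨hx1M, hx1q⟩, hMn, -, hMq⟩ := hn
  have hqM : xq ∉ M := fun h => hMq _ h _ rfl rfl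
  have hYM : ∀ x ∈ M, x ∉ Y := fun x hx hy => (hYm x hy).2 (by simp [hx])
  have h1Y : x1 ∉ Y := fun hy => (hYm _ hy).2 (by simp)
  have hqY : xq ∉ Y := fun hy => (hYm _ hy).2 (by simp)
  have hMS : ∀ x ∈ M, x ∈ S := fun x hx => hS x (by simp [hx])
  have h1S : x1 ∈ S := hS x1 (by simp)
  have hqS : xq ∈ S := hS xq (by simp)
  simp only [List.length_cons, List.length_append, List.length_nil] at hQ hY
  rcases Nat.eq_zero_or_pos b with rfl | hb
  · obtain ⟨y, hy⟩ : Y.Nonempty := Finset.card_pos.1 (by omega)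
    refine ⟨[x1, y, xq], ?_, ?_, ?_, by simp⟩
    · have : x1 ≠ y := fun h => h1Y (h ▸ hy)
      have : y ≠ xq := fun h => hqY (h ▸ hy)
      simp_all
    · have := hB _ _ (h1 y hy)
      have := hB _ _ (hq y hy)
      simp_all
    · have := (hYm y hy).1
      simp_all
  obtain ⟨n, rfl⟩ : ∃ n, b = n + 1 := ⟨b - 1, by omega⟩
  have hX := IsP.single (fun x y => ¬ E x y) x1
  have hXq := IsP.single (fun x y => ¬ E x y) xq
  rcases hQ with ⟨hl, hcard⟩ | ⟨hl, hcard⟩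
  · -- `2b` vertices are covered by two paths; an unused pair of `M` supplies one more end vertex
    obtain ⟨x, x', M, rfl⟩ : ∃ x x' M', M = x :: x' :: M' := by
      have hl2 : 2 ≤ M.length := by omega
      match M, hl2 with
      | x :: x' :: M', _ => exact ⟨x, x', M', rfl⟩
      | [x], h => simp at h
      | [], h => simp at h
    rw [List.isChain_cons_cons] at hcM
    obtain ⟨Z, hZY, hZ⟩ := Finset.exists_subset_card_eq (s := Y) (n := n + 2) (by omega)
    simp only [List.nodup_cons, List.mem_cons, not_or] at hMn
    obtain ⟨p, q, s, t, s', t', hp, hq', hs, ht, hs', ht', hd, hpY, hqY', hl'⟩ :=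
      exists_two_paths hB n M Z hMn.2.2 (fun z hz h => hYM z (by simp [hz]) (hZY h))
        (hcM.2.tail.imp fun _ _ h y hy => h y (hZY hy)) (by simp at hl; omega) hZ
    obtain ⟨z, hz, hzs⟩ : ∃ z, (z = x ∨ z = x') ∧ ¬ E s z := by
      rcases hcM.1 s (hZY hs) with h | h
      exacts [⟨x, Or.inl rfl, h⟩, ⟨x', Or.inr rfl, h⟩]
    have hzm : z ∈ x :: x' :: M := by simp; tauto
    have hzM : z ∉ M := by rcases hz with rfl | rfl <;> tauto
    have hz1 : z ≠ x1 := fun h => hx1M (h ▸ hzm)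
    have hzq : z ≠ xq := fun h => hqM (h ▸ hzm)
    have hzY := hYM z hzm
    have np : ∀ w, w ∉ Y → w ∉ M → w ∉ p ∧ w ∉ q := fun w hw hw' =>
      ⟨fun h => (hpY w h).elim (fun h => hw (hZY h)) hw',
        fun h => (hqY' w h).elim (fun h => hw (hZY h)) hw'⟩
    have n1 := np x1 h1Y (fun h => hx1M (by simp [h]))
    have nq := np xq hqY (fun h => hqM (by simp [h]))
    have nz := np z hzY hzM
    have hfin := (IsP.single (fun x y => ¬ E x y) z).join (hp.join (hX.join (hq'.join hXq
      (hB _ _ (hq _ (hZY ht'))) ?_) (hB _ _ (h1 _ (hZY hs'))) ?_) (h1 _ (hZY ht)) ?_)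
      (hB _ _ hzs) ?_
    · refine hfin.hasPath ?_ (by simp; omega)
      intro w hw
      simp only [List.mem_append, List.mem_singleton] at hw
      rcases hw with rfl | hw | rfl | hw | rfl
      · exact hMS _ hzm
      · exact (hpY w hw).elim (fun h => (hYm _ (hZY h)).1) (fun h => hMS _ (by simp [h]))
      · exact h1S
      · exact (hqY' w hw).elim (fun h => (hYm _ (hZY h)).1) (fun h => hMS _ (by simp [h]))
      · exact hqS
    · intro w hw hw'
      exact nq.2 (List.mem_singleton.1 hw' ▸ hw)
    · intro w hw
      rw [List.mem_singleton.1 hw]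
      simp [n1, hx1q]
    · intro w hw hw'
      simp only [List.mem_append, List.mem_singleton] at hw'
      rcases hw' with rfl | hw' | rfl
      exacts [n1.1 hw, hd _ hw hw', nq.1 hw]
    · intro w hw
      rw [List.mem_singleton.1 hw]
      simp [nz, hz1, hzq]
  · -- the end vertices `x1`, `xq` join the two paths and a further vertex of `Y`
    obtain ⟨Z, hZY, hZ⟩ := Finset.exists_subset_card_eq (s := Y) (n := n + 2) (by omega)
    obtain ⟨y, hy⟩ : (Y \ Z).Nonempty := Finset.card_pos.1 (by
      rw [Finset.card_sdiff_of_subset hZY]; omega)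
    rw [Finset.mem_sdiff] at hy
    obtain ⟨p, q, s, t, s', t', hp, hq', hs, ht, hs', ht', hd, hpY, hqY', hl'⟩ :=
      exists_two_paths hB n M Z hMn (fun z hz h => hYM z hz (hZY h))
        (hcM.imp fun _ _ h y hy => h y (hZY hy)) (by omega) hZ
    have np : ∀ w, w ∉ Z → w ∉ M → w ∉ p ∧ w ∉ q := fun w hw hw' =>
      ⟨fun h => (hpY w h).elim hw hw', fun h => (hqY' w h).elim hw hw'⟩
    have n1 := np x1 (fun h => h1Y (hZY h)) hx1M
    have nq := np xq (fun h => hqY (hZY h)) hqM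
    have ny := np y hy.2 (fun h => hYM y h hy.1)
    have y1 : x1 ≠ y := fun h => h1Y (h ▸ hy.1)
    have yq : xq ≠ y := fun h => hqY (h ▸ hy.1)
    have hfin := hp.join (hX.join (hq'.join (hXq.join (IsP.single (fun x y => ¬ E x y) y)
      (hq _ hy.1) (by simp [yq]))
      (hB _ _ (hq _ (hZY ht'))) ?_) (hB _ _ (h1 _ (hZY hs'))) ?_) (h1 _ (hZY ht)) ?_
    · refine hfin.hasPath ?_ (by simp; omega)
      intro w hw
      simp only [List.mem_append, List.mem_singleton] at hw
      rcases hw with hw | rfl | hw | rfl | rfl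
      · exact (hpY w hw).elim (fun h => (hYm _ (hZY h)).1) (fun h => hMS _ h)
      · exact h1S
      · exact (hqY' w hw).elim (fun h => (hYm _ (hZY h)).1) (fun h => hMS _ h)
      · exact hqS
      · exact (hYm _ hy.1).1
    · intro w hw hw'
      simp only [List.mem_append, List.mem_singleton] at hw'
      rcases hw' with rfl | rfl
      exacts [nq.2 hw, ny.2 hw]
    · intro w hw
      rw [List.mem_singleton.1 hw]
      simp [n1, hx1q, y1]
    · intro w hw hw'
      simp only [List.mem_append, List.mem_singleton] at hw'
      rcases hw' with rfl | hw' | rfl | rfl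
      exacts [n1.1 hw, hd _ hw hw', nq.1 hw, ny.1 hw]

lemma two_color_step [DecidableEq V] {E : V → V → Prop} (hE : ∀ x y, E x y → E y x) {S : Finset V}
    {a b : ℕ} (hab : b ≤ a) (hS : 3 + a + (a + b) ≤ S.card) (h : HasPath E S (2 * a + 1)) :
    HasPath E S (2 * a + 3) ∨ HasPath (fun x y => ¬ E x y) S (2 * b + 3) := by
  by_cases h3 : HasPath E S (2 * a + 3)
  · exact Or.inl h3
  right
  by_cases h2 : HasPath E S (2 * a + 2)
  · obtain ⟨Q, h4, h5, h6, h7⟩ := h2.exact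
    exact blue_of_longest hE h4 h5 h6 (by rwa [h7]) hab (by omega)
  · obtain ⟨Q, h4, h5, h6, h7⟩ := h.exact
    exact blue_of_longest hE h4 h5 h6 (by rwa [h7]) hab (by omega)

/-- The theorem of Gerencsér and Gyárfás for paths with an odd number of vertices: colouring the edges
of a complete graph on `3 + max a b + a + b` vertices red and blue produces a red path on `2a + 3`
vertices or a blue path on `2b + 3` vertices. -/
theorem two_color [DecidableEq V] (S : Finset V) : ∀ (n a b : ℕ) (E : V → V → Prop),
    (∀ x y, E x y → E y x) → a + b = n → 3 + max a b + (a + b) ≤ S.card →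
    HasPath E S (2 * a + 3) ∨ HasPath (fun x y => ¬ E x y) S (2 * b + 3) := by
  intro n
  induction n with
  | zero =>
    intro a b E hE hn hS
    obtain ⟨x, hx⟩ : S.Nonempty := Finset.card_pos.1 (by omega)
    refine two_color_step hE (by omega) (by omega) ⟨[x], by simp, by simp, by simpa, ?_⟩
    simp
    omega
  | succ n ih =>
    have key : ∀ (a b : ℕ) (E : V → V → Prop), (∀ x y, E x y → E y x) → a + b = n + 1 → b ≤ a →
        3 + max a b + (a + b) ≤ S.card →
        HasPath E S (2 * a + 3) ∨ HasPath (fun x y => ¬ E x y) S (2 * b + 3) := by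
      intro a b E hE hn hab hS
      obtain ⟨a, rfl⟩ : ∃ a', a = a' + 1 := ⟨a - 1, by omega⟩
      rcases ih a b E hE (by omega) (by omega) with h | h
      · exact two_color_step hE hab (by omega) h
      · exact Or.inr h
    intro a b E hE hn hS
    rcases le_total b a with hab | hab
    · exact key a b E hE hn hab hS
    · rcases key b a (fun x y => ¬ E x y) (fun x y h h' => h (hE _ _ h')) (by omega) hab
        (by omega) with h | h
      · exact Or.inr h
      · simp only [not_not] at h
        exact Or.inl h

/-! ### Gallai's theorem -/

variable {K : Type*}

/-- No triangle inside `S` has three distinct colours under `c`. -/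
def NoRainbow (c : V → V → K) (S : Finset V) : Prop :=
  ∀ x ∈ S, ∀ y ∈ S, ∀ z ∈ S, x ≠ y → y ≠ z → x ≠ z →
    c x y = c y z ∨ c y z = c x z ∨ c x y = c x z

/-- The graph of colour `g` on `S` is disconnected: `S` splits into two nonempty parts without an edge
of colour `g` between them. -/
def HasCut [DecidableEq V] (c : V → V → K) (g : K) (S : Finset V) : Prop :=
  ∃ X ⊆ S, X.Nonempty ∧ (S \ X).Nonempty ∧ ∀ x ∈ X, ∀ y ∈ S \ X, c x y ≠ g

lemma exists_of_not_hasCut [DecidableEq V] {c : V → V → K} {g : K} {S X : Finset V}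
    (h : ¬ HasCut c g S) (hX : X ⊆ S) (h1 : X.Nonempty) (h2 : (S \ X).Nonempty) :
    ∃ x ∈ X, ∃ y ∈ S, y ∉ X ∧ c x y = g := by
  by_contra hcon
  push Not at hcon
  refine h ⟨X, hX, h1, h2, fun x hx y hy => ?_⟩
  rw [Finset.mem_sdiff] at hy
  exact hcon x hx y hy.1 hy.2

/-- The component `C` of `x` in the graph of colour `g`. By the absence of rainbow triangles it is a
module: a vertex outside sends edges of a single colour to it. -/
lemma exists_component [DecidableEq V] {c : V → V → K} (hc : ∀ x y, c x y = c y x) {S : Finset V}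
    (hG : NoRainbow c S) (g : K) {x : V} (hx : x ∈ S) :
    ∃ C ⊆ S, x ∈ C ∧ (∀ y ∈ C, ∀ z ∈ S, z ∉ C → c y z ≠ g) ∧
      (∀ y ∈ C, ∀ y' ∈ C, ∀ z ∈ S, z ∉ C → c y z = c y' z) ∧
      (HasCut c g S → (S \ C).Nonempty) := by
  classical
  set r : V → V → Prop := fun p q => p ∈ S ∧ q ∈ S ∧ c p q = g with hr
  set C := S.filter (fun y => Relation.ReflTransGen r x y) with hC
  have hclosed : ∀ y ∈ C, ∀ z ∈ S, z ∉ C → c y z ≠ g := by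
    intro y hy z hz hzC h
    rw [hC, Finset.mem_filter] at hy hzC
    exact hzC ⟨hz, hy.2.tail ⟨hy.1, hz, h⟩⟩
  have hmod : ∀ y ∈ C, ∀ z ∈ S, z ∉ C → c y z = c x z := by
    intro y hy z hz hzC
    have hy' := (Finset.mem_filter.1 hy).2
    clear hy
    induction hy' with
    | refl => rfl
    | @tail p q hp hpq ih =>
      rw [← ih]
      by_cases hpe : p = q
      · rw [hpe]
      have hpC : p ∈ C := Finset.mem_filter.2 ⟨hpq.1, hp⟩
      have hqC : q ∈ C := Finset.mem_filter.2 ⟨hpq.2.1, hp.tail hpq⟩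
      have h1 := hclosed p hpC z hz hzC
      have h2 := hclosed q hqC z hz hzC
      have h3 := hG p hpq.1 q hpq.2.1 z hz hpe (fun h => hzC (h ▸ hqC)) (fun h => hzC (h ▸ hpC))
      have h4 := hpq.2.2
      grind
  refine ⟨C, Finset.filter_subset _ _, Finset.mem_filter.2 ⟨hx, .refl⟩, hclosed,
    fun y hy y' hy' z hz hzC => (hmod y hy z hz hzC).trans (hmod y' hy' z hz hzC).symm, ?_⟩
  rintro ⟨X, hXS, ⟨x1, hx1⟩, ⟨x2, hx2⟩, hX⟩
  have hside : ∀ y, Relation.ReflTransGen r x y → (y ∈ X ↔ x ∈ X) := by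
    intro y hy
    induction hy with
    | refl => rfl
    | @tail p q hp hpq ih =>
      rw [← ih]
      obtain ⟨hp, hq, hpq⟩ := hpq
      constructor
      · intro h
        by_contra h'
        exact hX q h p (Finset.mem_sdiff.2 ⟨hp, h'⟩) (by rw [hc, hpq])
      · intro h
        by_contra h'
        exact hX p h q (Finset.mem_sdiff.2 ⟨hq, h'⟩) hpq
  rw [Finset.mem_sdiff] at hx2
  by_cases hxX : x ∈ X
  · refine ⟨x2, Finset.mem_sdiff.2 ⟨hx2.1, fun h => hx2.2 ?_⟩⟩
    exact (hside x2 (Finset.mem_filter.1 h).2).2 hxX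
  · refine ⟨x1, Finset.mem_sdiff.2 ⟨hXS hx1, fun h => hxX ?_⟩⟩
    exact (hside x1 (Finset.mem_filter.1 h).2).1 hx1

lemma NoRainbow.mono {c : V → V → K} {S T : Finset V} (h : NoRainbow c S) (hT : T ⊆ S) :
    NoRainbow c T :=
  fun x hx y hy z hz => h x (hT hx) y (hT hy) z (hT hz)

/-- If colour `g` becomes disconnected on deleting `v`, then one of `g`, `p`, `q` is disconnected.
Otherwise `v` sends an edge of colour `g` to every `g`-component of `S - v`. Hence if it sends an edge
of colour `p` to a component, then this component sends only colour `p` to the others; so no other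
component, nor the same one, can play this role for `q`. -/
lemma hasCut_of_erase [DecidableEq V] {c : V → V → K} (hc : ∀ x y, c x y = c y x) {S : Finset V}
    (hG : NoRainbow c S) {v : V} (hv : v ∈ S) {g p q : K} (hgp : g ≠ p) (hgq : g ≠ q) (hpq : p ≠ q)
    (h : HasCut c g (S.erase v)) : HasCut c g S ∨ HasCut c p S ∨ HasCut c q S := by
  by_contra hcon
  push Not at hcon
  obtain ⟨ng, np, nq⟩ := hcon
  obtain ⟨e, he⟩ : (S.erase v).Nonempty := by
    obtain ⟨X, hX, hX', _⟩ := h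
    exact hX'.mono hX
  have hG' := hG.mono (Finset.erase_subset v S)
  have h1 : ({v} : Finset V).Nonempty := Finset.singleton_nonempty v
  have h2 : (S \ {v}).Nonempty := ⟨e, by simpa [and_comm] using he⟩
  have hvS : ({v} : Finset V) ⊆ S := by simpa
  obtain ⟨x, hx, y, hy, hyv, hxy⟩ := exists_of_not_hasCut np hvS h1 h2
  obtain ⟨x', hx', z, hz, hzv, hxz⟩ := exists_of_not_hasCut nq hvS h1 h2
  rw [Finset.mem_singleton] at hx hx' hyv hzv
  subst hx
  subst hx'
  -- a proper nonempty union of components of `S - v` receives an edge of colour `g` from `v`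
  have key : ∀ C ⊆ S.erase x', C.Nonempty → (∀ y ∈ C, ∀ z ∈ S.erase x', z ∉ C → c y z ≠ g) →
      ∃ d ∈ C, c x' d = g := by
    intro C hC hne hcl
    obtain ⟨d, hd, d', hd', hd'C, hdd⟩ := exists_of_not_hasCut ng
      (hC.trans (Finset.erase_subset _ _)) hne
      ⟨x', Finset.mem_sdiff.2 ⟨hv, fun h => by simpa using hC h⟩⟩
    by_cases hdx : d' = x'
    · exact ⟨d, hd, by rw [hc, ← hdx, hdd]⟩
    · exact absurd hdd (hcl d hd d' (Finset.mem_erase.2 ⟨hdx, hd'⟩) hd'C)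
  obtain ⟨C, hCS, hyC, hcl, hmod, hprop⟩ := exists_component hc hG' g (Finset.mem_erase.2 ⟨hyv, hy⟩)
  obtain ⟨D, hDS, hzD, hcl', hmod', hprop'⟩ := exists_component hc hG' g (Finset.mem_erase.2 ⟨hzv, hz⟩)
  have hmem : ∀ d ∈ S.erase x', d ≠ x' ∧ d ∈ S := fun d hd => Finset.mem_erase.1 hd
  have same : ∀ C ⊆ S.erase x', y ∈ C → z ∈ C →
      (∀ y ∈ C, ∀ z ∈ S.erase x', z ∉ C → c y z ≠ g) →
      (∀ y ∈ C, ∀ y' ∈ C, ∀ z ∈ S.erase x', z ∉ C → c y z = c y' z) →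
      (S.erase x' \ C).Nonempty → False := by
    intro C hCS hyC hzC hcl hmod hne
    obtain ⟨d, hd, hdg⟩ := key (S.erase x' \ C) Finset.sdiff_subset hne (by
      intro a ha b hb hba hab
      rw [Finset.mem_sdiff] at ha hba
      refine hcl b (by tauto) a ha.1 ha.2 (by rw [hc, hab]))
    rw [Finset.mem_sdiff] at hd
    have e1 := hmod y hyC z hzC d hd.1 hd.2
    have e2 := hcl y hyC d hd.1 hd.2
    have e3 := hcl z hzC d hd.1 hd.2
    have t1 := hG x' hv y hy d (hmem d hd.1).2 (Ne.symm hyv) (fun h => hd.2 (h ▸ hyC))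
      (Ne.symm (hmem d hd.1).1)
    have t2 := hG x' hv z hz d (hmem d hd.1).2 (Ne.symm hzv) (fun h => hd.2 (h ▸ hzC))
      (Ne.symm (hmem d hd.1).1)
    grind
  have hzC : z ∉ C := fun hzC => same C hCS hyC hzC hcl hmod (hprop h)
  have hyD : y ∉ D := fun hyD => same D hDS hyD hzD hcl' hmod' (hprop' h)
  obtain ⟨d, hd, hdg⟩ := key C hCS ⟨y, hyC⟩ hcl
  obtain ⟨d', hd', hdg'⟩ := key D hDS ⟨z, hzD⟩ hcl'
  have e1 := hcl d hd z (hDS hzD) hzC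
  have e2 := hmod y hyC d hd z (hDS hzD) hzC
  have e3 := hcl' d' hd' y (hCS hyC) hyD
  have e4 := hmod' z hzD d' hd' y (hCS hyC) hyD
  have t1 := hG x' hv d (hmem d (hCS hd)).2 z hz (Ne.symm (hmem d (hCS hd)).1)
    (fun h => hzC (h ▸ hd)) (Ne.symm hzv)
  have t2 := hG x' hv d' (hmem d' (hDS hd')).2 y hy (Ne.symm (hmem d' (hDS hd')).1)
    (fun h => hyD (h ▸ hd')) (Ne.symm hyv)
  have e5 := hc y z
  grind

/-- Gallai's theorem: if no triangle is rainbow then among any three colours one is disconnected. -/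
theorem gallai_cut [DecidableEq V] {c : V → V → K} (hc : ∀ x y, c x y = c y x) {g p q : K}
    (hgp : g ≠ p) (hgq : g ≠ q) (hpq : p ≠ q) : ∀ (n : ℕ) (S : Finset V), S.card = n + 2 →
      NoRainbow c S → HasCut c g S ∨ HasCut c p S ∨ HasCut c q S := by
  intro n
  induction n with
  | zero =>
    intro S hS _
    obtain ⟨x, y, hxy, rfl⟩ := Finset.card_eq_two.1 hS
    have hcut : ∀ i, c x y ≠ i → HasCut c i {x, y} := by
      intro i hi
      refine ⟨{x}, by simp, by simp, ⟨y, by simp [Ne.symm hxy]⟩, ?_⟩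
      intro a ha b hb
      simp only [Finset.mem_singleton, Finset.mem_sdiff, Finset.mem_insert] at ha hb
      rw [ha, hb.1.resolve_left hb.2]
      exact hi
    by_cases h : c x y = g
    · exact Or.inr (Or.inl (hcut p (h ▸ hgp)))
    · exact Or.inl (hcut g h)
  | succ n ih =>
    intro S hS hG
    obtain ⟨v, hv⟩ : S.Nonempty := Finset.card_pos.1 (by omega)
    rcases ih (S.erase v) (by rw [Finset.card_erase_of_mem hv]; omega)
      (hG.mono (Finset.erase_subset _ _)) with h | h | h
    · exact hasCut_of_erase hc hG hv hgp hgq hpq h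
    · have := hasCut_of_erase hc hG hv hgp.symm hpq hgq h
      tauto
    · have := hasCut_of_erase hc hG hv hgq.symm hpq.symm hgp h
      tauto

/-! ### The upper bound -/

/-- `Avoids c S w`: `c` is a symmetric colouring without rainbow triangle on `S`, and contains in no
colour `j` a path on `2 * w j + 3` vertices. -/
structure Avoids (c : V → V → K) (S : Finset V) (w : K → ℕ) : Prop where
  symm : ∀ x y, c x y = c y x
  gallai : NoRainbow c S
  noPath : ∀ j, ¬ HasPath (fun x y => c x y = j) S (2 * w j + 3)

/-- The number of vertices that forces a path on `2 * w j + 3` vertices in some colour `j`. -/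
def bound [Fintype K] (w : K → ℕ) : ℕ := 3 + Finset.univ.sup w + ∑ j, w j

/-- In a minimal counterexample, a proper module `A` is joined in some colour `j` to at least `w j + 1`
vertices. Otherwise lower each weight `w j` by the number `r j` of vertices joined to `A` in colour `j`:
by minimality `A` contains a path that is too long for the reduced weights, and alternating between `A`
and these `r j` vertices prolongs it to a path too long for `w`. -/
lemma exists_color_of_module [DecidableEq V] [Fintype K] [DecidableEq K] {c : V → V → K}
    {S : Finset V} {w : K → ℕ} (h : Avoids c S w) (hb : bound w ≤ S.card)
    (hmin : ∀ T : Finset V, T.card < S.card → ∀ (w : K → ℕ) (c : V → V → K),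
      bound w ≤ T.card → ¬ Avoids c T w)
    {A : Finset V} (hA : A ⊆ S) (hA1 : A.Nonempty) (hA2 : (S \ A).Nonempty)
    (hmod : ∀ y ∈ A, ∀ y' ∈ A, ∀ z ∈ S, z ∉ A → c y z = c y' z) :
    ∃ j, ∃ R ⊆ S, Disjoint A R ∧ w j + 1 ≤ R.card ∧ ∀ a ∈ A, ∀ x ∈ R, c a x = j := by
  obtain ⟨a₀, ha₀⟩ := hA1
  set R : K → Finset V := fun j => (S \ A).filter (fun x => c a₀ x = j) with hR
  have hRA : ∀ j, Disjoint A (R j) := fun j =>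
    Finset.disjoint_left.2 fun x hx hx' =>
      (Finset.mem_sdiff.1 (Finset.mem_filter.1 hx').1).2 hx
  have hRS : ∀ j, R j ⊆ S := fun j => (Finset.filter_subset _ _).trans Finset.sdiff_subset
  have hRc : ∀ j, ∀ a ∈ A, ∀ x ∈ R j, c a x = j := by
    intro j a ha x hx
    obtain ⟨h1, h2⟩ := Finset.mem_filter.1 hx
    rw [Finset.mem_sdiff] at h1
    rw [hmod a ha a₀ ha₀ x h1.1 h1.2, h2]
  by_contra hcon
  have hle : ∀ j, (R j).card ≤ w j := by
    intro j
    by_contra hj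
    exact hcon ⟨j, R j, hRS j, hRA j, by omega, hRc j⟩
  have hsum : (S \ A).card = ∑ j, (R j).card :=
    Finset.card_eq_sum_card_fiberwise (fun _ _ => Finset.mem_coe.2 (Finset.mem_univ _))
  have hcard : (S \ A).card + A.card = S.card := Finset.card_sdiff_add_card_eq_card hA
  have hpos := Finset.card_pos.2 hA2
  have hsub : ∑ j, (w j - (R j).card) + ∑ j, (R j).card = ∑ j, w j := by
    rw [← Finset.sum_add_distrib]
    exact Finset.sum_congr rfl fun j _ => Nat.sub_add_cancel (hle j)
  have hsup : Finset.univ.sup (fun j => w j - (R j).card) ≤ Finset.univ.sup w :=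
    Finset.sup_mono_fun fun j _ => Nat.sub_le _ _
  unfold bound at hb hmin
  refine hmin A (by omega) (fun j => w j - (R j).card) c (by omega)
    ⟨h.symm, h.gallai.mono hA, fun j hj => h.noPath j ?_⟩
  obtain ⟨l, l1, l2, l3, l4⟩ := hj.exact
  obtain ⟨s, hs⟩ : ∃ s, l.head? = some s := by
    cases l with
    | nil => simp at l4
    | cons s l => exact ⟨s, rfl⟩
  obtain ⟨t, ht⟩ : ∃ t, l.getLast? = some t :=
    ⟨l.getLast (by rintro rfl; simp at l4), List.getLast?_eq_some_getLast _⟩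
  have hlA : l.toFinset ⊆ A := fun x hx => l3 x (List.mem_toFinset.1 hx)
  have k1 : (w j - (R j).card) ≤ ∑ j, (w j - (R j).card) :=
    Finset.single_le_sum (f := fun j => w j - (R j).card) (fun _ _ => Nat.zero_le _)
      (Finset.mem_univ j)
  have k2 : w j ≤ Finset.univ.sup w := Finset.le_sup (Finset.mem_univ j)
  have k3 := hle j
  refine (exists_alternating (E := fun x y => c x y = j) (A := A) (R := R j) ?_ (hRA j)
    (R j).card l s t ⟨l1, l2, hs, ht⟩ (l3 s (List.mem_of_mem_head? hs)) ?_ ?_ ?_).mono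
    (fun _ _ h => h) (Finset.union_subset hA (hRS j)) (by omega)
  · intro a ha x hx
    exact ⟨hRc j a ha x hx, by rw [h.symm]; exact hRc j a ha x hx⟩
  · exact fun x hx => Finset.mem_union_left _ (l3 x hx)
  · rw [Finset.card_sdiff_of_subset hlA, List.toFinset_card_of_nodup l1]
    omega
  · rw [Finset.sdiff_eq_self_of_disjoint]
    exact ((hRA j).mono_left hlA).symm

/-- Recolouring a module `A` in a colour `j` that joins it to at least `w j + 1` vertices creates
neither a rainbow triangle nor a forbidden path. -/
lemma Avoids.recolor [DecidableEq V] {c : V → V → K} {S : Finset V} {w : K → ℕ}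
    (h : Avoids c S w) {A R : Finset V} {j : K} (hRS : R ⊆ S) (hd : Disjoint A R)
    (hR : w j + 1 ≤ R.card) (hj : ∀ a ∈ A, ∀ x ∈ R, c a x = j)
    (hmod : ∀ y ∈ A, ∀ y' ∈ A, ∀ z ∈ S, z ∉ A → c y z = c y' z) :
    Avoids (fun x y => if x ∈ A ∧ y ∈ A then j else c x y) S w := by
  refine ⟨?_, ?_, ?_⟩
  · intro x y
    simp only [and_comm, h.symm x y]
  · intro x hx y hy z hz hxy hyz hxz
    have t := h.gallai x hx y hy z hz hxy hyz hxz
    have s1 := h.symm x y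
    have s2 := h.symm y z
    have s3 := h.symm x z
    have m1 := hmod x
    have m2 := hmod y
    by_cases xA : x ∈ A <;> by_cases yA : y ∈ A <;> by_cases zA : z ∈ A <;> simp [xA, yA, zA] <;>
      grind
  · intro i hi
    by_cases hij : j = i
    · subst hij
      refine h.noPath j (closure_set (A := A) (R := R) ?_ hRS hd hj hR
        (hi.mono ?_ (le_refl _) le_rfl))
      · intro x y hxy
        rw [h.symm, hxy]
      · intro x y hxy
        by_cases hA : x ∈ A ∧ y ∈ A
        · exact Or.inr hA
        · rw [if_neg hA] at hxy
          exact Or.inl hxy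
    · refine h.noPath i (hi.mono ?_ (le_refl _) le_rfl)
      intro x y hxy
      by_cases hA : x ∈ A ∧ y ∈ A
      · rw [if_pos hA] at hxy
        exact absurd hxy hij
      · rwa [if_neg hA] at hxy

/-- The set of colours appearing on `S`. -/
def used [DecidableEq V] [DecidableEq K] (c : V → V → K) (S : Finset V) : Finset K :=
  S.offDiag.image fun e => c e.1 e.2

/-- A disconnected colour `g` can be eliminated from a minimal counterexample, by recolouring its
components one after the other. -/
lemma exists_eliminate [DecidableEq V] [Fintype K] [DecidableEq K] {S : Finset V} {w : K → ℕ}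
    (hb : bound w ≤ S.card)
    (hmin : ∀ T : Finset V, T.card < S.card → ∀ (w : K → ℕ) (c : V → V → K),
      bound w ≤ T.card → ¬ Avoids c T w) {g : K} :
    ∀ (n : ℕ) (c : V → V → K), Avoids c S w → HasCut c g S →
      (S.offDiag.filter fun e => c e.1 e.2 = g).card = n →
      ∃ c', Avoids c' S w ∧ used c' S ⊆ (used c S).erase g := by
  intro n
  induction n using Nat.strong_induction_on with
  | _ n ih =>
    intro c hc hcut hn
    by_cases hg : ∃ u ∈ S, ∃ v ∈ S, u ≠ v ∧ c u v = g
    · obtain ⟨u, hu, v, hv, huv, hug⟩ := hg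
      obtain ⟨C, hCS, huC, hcl, hmod, hprop⟩ := exists_component hc.symm hc.gallai g hu
      have hvC : v ∈ C := by
        by_contra hvC
        exact hcl u huC v hv hvC hug
      obtain ⟨j, R, hRS, hd, hR, hj⟩ :=
        exists_color_of_module hc hb hmin hCS ⟨u, huC⟩ (hprop hcut) hmod
      obtain ⟨x, hx⟩ : R.Nonempty := Finset.card_pos.1 (by omega)
      have hxC : x ∉ C := fun h => Finset.disjoint_left.1 hd h hx
      have hjg : j ≠ g := by
        rw [← hj u huC x hx]
        exact hcl u huC x (hRS hx) hxC
      have hrec := hc.recolor hRS hd hR hj hmod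
      set c₁ : V → V → K := fun x y => if x ∈ C ∧ y ∈ C then j else c x y with hc₁
      have hle : ∀ x y, c₁ x y = g → c x y = g := by
        intro x y h
        simp only [hc₁] at h
        split_ifs at h
        · exact absurd h hjg
        · exact h
      have hlt : (S.offDiag.filter fun e => c₁ e.1 e.2 = g).card < n := by
        rw [← hn]
        refine Finset.card_lt_card (Finset.ssubset_iff_of_subset ?_ |>.2 ⟨(u, v), ?_, ?_⟩)
        · intro e he
          rw [Finset.mem_filter] at he ⊢
          exact ⟨he.1, hle _ _ he.2⟩
        · simp [hu, hv, huv, hug]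
        · simp [hc₁, huC, hvC, hjg]
      have hcut₁ : HasCut c₁ g S := by
        obtain ⟨X, h1, h2, h3, h4⟩ := hcut
        exact ⟨X, h1, h2, h3, fun x hx y hy h => h4 x hx y hy (hle _ _ h)⟩
      obtain ⟨c', h1, h2⟩ := ih _ hlt c₁ hrec hcut₁ rfl
      refine ⟨c', h1, h2.trans (Finset.erase_subset_erase _ ?_)⟩
      intro i hi
      obtain ⟨e, he, rfl⟩ := Finset.mem_image.1 hi
      by_cases heC : e.1 ∈ C ∧ e.2 ∈ C
      · -- the new colour `j` was already present, between `C` and `R`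
        refine Finset.mem_image.2 ⟨(u, x), ?_, ?_⟩
        · rw [Finset.mem_offDiag]
          exact ⟨hu, hRS hx, fun h : u = x => hxC (h ▸ huC)⟩
        · simp only [hc₁, if_pos heC]
          exact hj u huC x hx
      · refine Finset.mem_image.2 ⟨e, he, ?_⟩
        simp only [hc₁, if_neg heC]
    · refine ⟨c, hc, fun i hi => Finset.mem_erase.2 ⟨?_, hi⟩⟩
      rintro rfl
      obtain ⟨e, he, h⟩ := Finset.mem_image.1 hi
      rw [Finset.mem_offDiag] at he
      exact hg ⟨e.1, he.1, e.2, he.2.1, he.2.2, h⟩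

lemma HasPath.refine {E : V → V → Prop} {S : Finset V} {n : ℕ} (h : HasPath E S n) :
    HasPath (fun x y => E x y ∧ x ≠ y ∧ x ∈ S ∧ y ∈ S) S n := by
  obtain ⟨l, h1, h2, h3, h4⟩ := h
  refine ⟨l, h1, ?_, h3, h4⟩
  rw [List.isChain_iff_getElem] at h2 ⊢
  intro i hi
  refine ⟨h2 i hi, fun h => ?_, h3 _ (List.getElem_mem _), h3 _ (List.getElem_mem _)⟩
  have := (h1.getElem_inj_iff).1 h
  omega

/-- At most two colours: this is the two-colour theorem. -/
lemma not_avoids_of_two [DecidableEq V] [Fintype K] [DecidableEq K] {S : Finset V} {w : K → ℕ}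
    (hb : bound w ≤ S.card) {c : V → V → K} (hc : Avoids c S w) (hu : (used c S).card ≤ 2) :
    False := by
  unfold bound at hb
  have hsup : ∀ j, w j ≤ Finset.univ.sup w := fun j => Finset.le_sup (Finset.mem_univ j)
  have hmem : ∀ x y, x ≠ y ∧ x ∈ S ∧ y ∈ S → c x y ∈ used c S := fun x y h =>
    Finset.mem_image.2 ⟨(x, y), by simp [h], rfl⟩
  obtain ⟨x, hx, y, hy, hxy⟩ := Finset.one_lt_card.1 (show 1 < S.card by omega)
  set r := c x y with hr
  have hru := hmem x y ⟨hxy, hx, hy⟩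
  have hsymm : ∀ x y, c x y = r → c y x = r := fun x y h => by rw [hc.symm, h]
  by_cases hex : ∃ b ∈ used c S, b ≠ r
  · obtain ⟨b, hbu, hbr⟩ := hex
    have hpair : ({r, b} : Finset K) = used c S := by
      refine Finset.eq_of_subset_of_card_le ?_ (by rwa [Finset.card_pair hbr.symm])
      intro i hi
      rcases Finset.mem_insert.1 hi with rfl | hi
      · exact hru
      · exact Finset.mem_singleton.1 hi ▸ hbu
    have hsum : w r + w b ≤ ∑ j, w j := by
      rw [← Finset.sum_pair hbr.symm]
      exact Finset.sum_le_sum_of_subset (Finset.subset_univ _)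
    have := hsup r
    have := hsup b
    rcases two_color S _ (w r) (w b) (fun x y => c x y = r) hsymm rfl (by omega) with h | h
    · exact hc.noPath r h
    · refine hc.noPath b (h.refine.mono ?_ (le_refl _) le_rfl)
      intro x y h
      have := hmem x y h.2
      rw [← hpair, Finset.mem_insert, Finset.mem_singleton] at this
      exact this.resolve_left h.1
  · push Not at hex
    have hsum : w r ≤ ∑ j, w j :=
      Finset.single_le_sum (f := w) (fun _ _ => Nat.zero_le _) (Finset.mem_univ r)
    have := hsup r
    rcases two_color S _ (w r) 0 (fun x y => c x y = r) hsymm rfl (by omega) with h | h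
    · exact hc.noPath r h
    · obtain ⟨l, -, h2, -, h4⟩ := h.refine
      match l, h4 with
      | x :: y :: l, _ =>
        rw [List.isChain_cons_cons] at h2
        exact h2.1.1 (hex _ (hmem _ _ h2.1.2))
      | [x], h => simp at h
      | [], h => simp at h

/-- The upper bound with an individual path length for every colour. -/
theorem not_avoids [DecidableEq V] [Fintype K] [DecidableEq K] : ∀ (n : ℕ) (S : Finset V),
    S.card = n → ∀ (w : K → ℕ) (c : V → V → K), bound w ≤ S.card → ¬ Avoids c S w := by
  intro n
  induction n using Nat.strong_induction_on with
  | _ n ih =>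
    intro S hS w c hb hc
    have hmin : ∀ T : Finset V, T.card < S.card → ∀ (w : K → ℕ) (c : V → V → K),
        bound w ≤ T.card → ¬ Avoids c T w := fun T hT => ih _ (hS ▸ hT) T rfl
    have key : ∀ (m : ℕ) (c : V → V → K), Avoids c S w → (used c S).card = m → False := by
      intro m
      induction m using Nat.strong_induction_on with
      | _ m ihm =>
        intro c hc hm
        by_cases h2 : (used c S).card ≤ 2
        · exact not_avoids_of_two hb hc h2
        have elim : ∀ g ∈ used c S, HasCut c g S → False := by
          intro g hg hcut
          obtain ⟨c', h1, h2⟩ := exists_eliminate hb hmin _ c hc hcut rfl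
          refine ihm _ ?_ c' h1 rfl
          rw [← hm]
          exact (Finset.card_le_card h2).trans_lt (Finset.card_erase_lt_of_mem hg)
        obtain ⟨g, p, q, hg, hp, hq, hgp, hgq, hpq⟩ := Finset.two_lt_card_iff.1 (not_le.1 h2)
        unfold bound at hb
        rcases gallai_cut hc.symm hgp hgq hpq (S.card - 2) S (by omega) hc.gallai with h | h | h
        exacts [elim g hg h, elim p hp h, elim q hq h]
    exact key _ c hc rfl

/-! ### The Gallai-Ramsey number of the path on nine vertices -/

/-- The lower bound: colour the edge `uv` by `(max u v - 5) / 3` (truncated subtraction), so that the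
vertices `0, …, 7` span colour `0` and each further colour `i` is given by three new vertices joined to
all earlier ones. A path on nine vertices in colour `i > 0` would need four vertices of level `i`. -/
lemma lower {k N : ℕ} (hk : 1 ≤ k) (hN : N < 3 * k + 6) :
    ∃ c : Sym2 (Fin N) → Fin k, IsGallai c ∧ ∀ i, ¬ HasMonoCopy c (SimpleGraph.pathGraph 9) i := by
  have hlt : ∀ u v : Fin N, (max (u : ℕ) v - 5) / 3 < k := by
    intro u v
    have := u.2
    have := v.2
    omega
  refine ⟨Sym2.lift ⟨fun u v => ⟨(max (u : ℕ) v - 5) / 3, hlt u v⟩, fun u v => by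
    simp only [max_comm]⟩, ?_, ?_⟩
  · intro x y z _ _ _
    simp only [Sym2.lift_mk, Fin.mk.injEq]
    omega
  · rintro ⟨i, hi⟩ ⟨f, hf, h⟩
    have hne : ∀ a b : Fin 9, a ≠ b → (f a : ℕ) ≠ f b := fun a b hab h =>
      hab (hf (Fin.ext h))
    have hadj : ∀ a b : Fin 9, (a : ℕ) + 1 = b → (max (f a : ℕ) (f b) - 5) / 3 = i := by
      intro a b hab
      have := h a b (SimpleGraph.pathGraph_adj.2 (Or.inl hab))
      simpa only [Sym2.lift_mk, Fin.mk.injEq] using this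
    rcases Nat.eq_zero_or_pos i with rfl | hpos
    · have hlt8 : ∀ a : Fin 9, (f a : ℕ) < 8 := by
        intro a
        by_cases ha : (a : ℕ) = 8
        · have := hadj ⟨7, by omega⟩ a (by simp [ha])
          omega
        · have := hadj a ⟨a + 1, by omega⟩ rfl
          omega
      have := Fintype.card_le_of_injective (fun a => (⟨f a, hlt8 a⟩ : Fin 8))
        (fun a b hab => hf (Fin.ext (by simpa using hab)))
      simp at this
    · have e1 := hadj 0 1 rfl
      have e2 := hadj 2 3 rfl
      have e3 := hadj 4 5 rfl
      have e4 := hadj 6 7 rfl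
      -- each of the edges 01, 23, 45, 67 contains one of the three vertices of level `i`
      have key : ∀ a b : Fin 9, (max (f a : ℕ) (f b) - 5) / 3 = i →
          ∃ d, (d = a ∨ d = b) ∧ 3 * i + 5 ≤ (f d : ℕ) ∧ (f d : ℕ) < 3 * i + 8 := by
        intro a b hab
        rcases le_total (f a : ℕ) (f b) with hle | hle
        · exact ⟨b, Or.inr rfl, by omega⟩
        · exact ⟨a, Or.inl rfl, by omega⟩
      obtain ⟨d1, g1, h1⟩ := key _ _ e1
      obtain ⟨d2, g2, h2⟩ := key _ _ e2
      obtain ⟨d3, g3, h3⟩ := key _ _ e3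
      obtain ⟨d4, g4, h4⟩ := key _ _ e4
      have n12 := hne d1 d2 (by rcases g1 with rfl | rfl <;> rcases g2 with rfl | rfl <;> decide)
      have n13 := hne d1 d3 (by rcases g1 with rfl | rfl <;> rcases g3 with rfl | rfl <;> decide)
      have n14 := hne d1 d4 (by rcases g1 with rfl | rfl <;> rcases g4 with rfl | rfl <;> decide)
      have n23 := hne d2 d3 (by rcases g2 with rfl | rfl <;> rcases g3 with rfl | rfl <;> decide)
      have n24 := hne d2 d4 (by rcases g2 with rfl | rfl <;> rcases g4 with rfl | rfl <;> decide)
      have n34 := hne d3 d4 (by rcases g3 with rfl | rfl <;> rcases g4 with rfl | rfl <;> decide)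
      omega

lemma upper {k : ℕ} (c : Sym2 (Fin (3 * k + 6)) → Fin k) (hc : IsGallai c) :
    ∃ i, HasMonoCopy c (SimpleGraph.pathGraph 9) i := by
  by_contra hcon
  push Not at hcon
  have hb : bound (fun _ : Fin k => 3) ≤ (Finset.univ : Finset (Fin (3 * k + 6))).card := by
    have : (Finset.univ : Finset (Fin k)).sup (fun _ => 3) ≤ 3 := Finset.sup_le fun _ _ => le_rfl
    simp only [bound, Finset.sum_const, Finset.card_univ, Fintype.card_fin, smul_eq_mul]
    omega
  refine not_avoids _ Finset.univ rfl (fun _ => 3) (fun x y => c s(x, y)) hb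
    ⟨fun x y => by rw [Sym2.eq_swap], fun x _ y _ z _ => hc x y z, fun j hj => hcon j ?_⟩
  obtain ⟨l, h1, h2, -, h4⟩ := hj.exact
  rw [List.isChain_iff_getElem] at h2
  refine ⟨fun a => l[(a : ℕ)]'(by omega), ?_, ?_⟩
  · intro a b hab
    exact Fin.ext (h1.getElem_inj_iff.1 hab)
  · intro a b hab
    rcases SimpleGraph.pathGraph_adj.1 hab with h | h
    · have := h2 a (by omega)
      simpa only [h] using this
    · have := h2 b (by omega)
      rw [Sym2.eq_swap]
      simpa only [h] using this

end GRP9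

/-- GR_k(P₉) = 3k + 6. -/
theorem stmt_10 (k : ℕ) (hk : 1 ≤ k) :
    IsLeast {N | 0 < N ∧
      GallaiRamseyProp (fun _ : Fin k => (⟨9, SimpleGraph.pathGraph 9⟩ : Σ V : ℕ, SimpleGraph (Fin V))) N} (3 * k + 6) := by
  refine ⟨⟨by omega, fun c hc => GRP9.upper c hc⟩, ?_⟩
  rintro N ⟨_, hN⟩
  by_contra hlt
  obtain ⟨c, hc, h⟩ := GRP9.lower hk (not_le.1 hlt)
  obtain ⟨i, hi⟩ := hN c hc
  exact h i hi
end

section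
/- For every integer k ≥ 1, GR_k(P_5) = k + 4. -/
/-! ### Monochromatic spanning stars -/

/-- A symmetric edge coloring `f x y` with no rainbow triangle and no monochromatic `P₅`. The
values on the diagonal are irrelevant. -/
structure GoodColoring {α C : Type*} (f : α → α → C) : Prop where
  symm : ∀ x y, f x y = f y x
  gallai : ∀ x y z, x ≠ y → y ≠ z → x ≠ z → f x y = f y z ∨ f y z = f x z ∨ f x y = f x z
  noPath : ∀ a b c d e, a ≠ b → a ≠ c → a ≠ d → a ≠ e → b ≠ c → b ≠ d → b ≠ e →
    c ≠ d → c ≠ e → d ≠ e → ∀ i, f a b = i → f b c = i → f c d = i → f d e = i → False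

/-- Some vertex of `S` is joined to all other vertices of `S` in a single color. -/
def HasStar {α C : Type*} (f : α → α → C) (S : Finset α) : Prop :=
  ∃ v ∈ S, ∃ i, ∀ x ∈ S, x ≠ v → f v x = i

section Upper

variable {α C : Type*} [DecidableEq α] {f : α → α → C}

/-- The induction step: a monochromatic spanning star survives the addition of a vertex, possibly
with another centre. -/
theorem GoodColoring.hasStar_insert (hf : GoodColoring f) {S : Finset α} {w : α}
    (hw : w ∉ S) (hS : 4 ≤ S.card) (h : HasStar f S) : HasStar f (insert w S) := by
  obtain ⟨v, hv, i, hi⟩ := h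
  have hwv : w ≠ v := by rintro rfl; exact hw hv
  by_cases h1 : f v w = i
  · exact ⟨v, by simp [hv], i, by grind⟩
  by_cases h2 : ∃ x ∈ S, x ≠ v ∧ f w x = i
  · exfalso
    obtain ⟨x, hx, hxv, hxi⟩ := h2
    have hwx : w ≠ x := by rintro rfl; exact hw hx
    have h3 : 1 < ((S.erase v).erase x).card := by
      rw [Finset.card_erase_of_mem (by simp [hx, hxv]), Finset.card_erase_of_mem hv]; omega
    obtain ⟨y, hy, z, hz, hyz⟩ := Finset.one_lt_card.1 h3
    simp only [Finset.mem_erase] at hy hz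
    have hwy : w ≠ y := by rintro rfl; exact hw hy.2.2
    have hwz : w ≠ z := by rintro rfl; exact hw hz.2.2
    -- With `w x` and the star at `v` of color `i`, all of `w v`, `w y` and `x y` have one
    -- color `f v w` for every leaf `y` other than `x`.
    have key : ∀ y z, y ∈ S → z ∈ S → y ≠ v → z ≠ v → y ≠ x → z ≠ x → y ≠ z → w ≠ y → w ≠ z →
        f w y = f v w ∧ f x y = f v w := by
      intro y z hyS hzS hyv hzv hyx hzx hyz hwy hwz
      have a1 := hi y hyS hyv
      have a2 := hi z hzS hzv
      have a3 : f w y ≠ i := fun e => hf.noPath x w y v z hwx.symm hyx.symm hxv hzx.symm hwy hwv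
        hwz hyv hyz hzv.symm i (by rw [hf.symm, hxi]) e (by rw [hf.symm, a1]) a2
      have a4 : f x y ≠ i := fun e => hf.noPath w x y v z hwx hwy hwv hwz hyx.symm hxv hzx.symm
        hyv hyz hzv.symm i hxi e (by rw [hf.symm, a1]) a2
      have g1 := hf.gallai v w y hwv.symm hwy hyv.symm
      have g2 := hf.gallai w x y hwx hyx.symm hwy
      grind
    have k1 := key y z hy.2.2 hz.2.2 hy.2.1 hz.2.1 hy.1 hz.1 hyz hwy hwz
    have k2 := key z y hz.2.2 hy.2.2 hz.2.1 hy.2.1 hz.1 hy.1 hyz.symm hwz hwy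
    exact hf.noPath y x z w v hy.1 hyz hwy.symm hy.2.1 hz.1.symm hwx.symm hxv hwz.symm
      hz.2.1 hwv (f v w) (by rw [hf.symm, k1.2]) k2.2 (by rw [hf.symm, k2.1]) (hf.symm _ _)
  · push Not at h2
    refine ⟨w, by simp, f v w, fun x hx hxw => ?_⟩
    have hxS : x ∈ S := by grind
    by_cases hxv : x = v
    · rw [hxv, hf.symm]
    · have := hf.gallai w v x hwv (Ne.symm hxv) hxw.symm
      have := hf.symm w v
      have := h2 x hxS hxv
      have := hi x hxS hxv
      grind

/-- On four vertices some color spans a connected graph, and this graph contains a star or a path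
on all four of them. -/
theorem GoodColoring.star_or_path_of_card_four (hf : GoodColoring f) {S : Finset α}
    (hS : S.card = 4) :
    HasStar f S ∨ ∃ a b c d, a ≠ b ∧ a ≠ c ∧ a ≠ d ∧ b ≠ c ∧ b ≠ d ∧ c ≠ d ∧
      S = {a, b, c, d} ∧ ∃ i, f a b = i ∧ f b c = i ∧ f c d = i := by
  -- The case of a cherry `x y z` of color `i` inside `S`.
  have key : ∀ x y z d, x ≠ y → x ≠ z → x ≠ d → y ≠ z → y ≠ d → z ≠ d → S = {x, y, z, d} →
      f x y = f y z → HasStar f S ∨ ∃ a b c d, a ≠ b ∧ a ≠ c ∧ a ≠ d ∧ b ≠ c ∧ b ≠ d ∧ c ≠ d ∧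
      S = {a, b, c, d} ∧ ∃ i, f a b = i ∧ f b c = i ∧ f c d = i := by
    intro x y z d hxy hxz hxd hyz hyd hzd hSe h
    have s1 := hf.symm x y
    have s2 := hf.symm z d
    have s3 := hf.symm y d
    have s4 := hf.symm x d
    have s5 := hf.symm y z
    by_cases h1 : f d x = f x y
    · exact Or.inr ⟨d, x, y, z, hxd.symm, hyd.symm, hzd.symm, hxy, hxz, hyz, by
        rw [hSe]; ext; simp; tauto, f x y, h1, rfl, h.symm⟩
    by_cases h2 : f d z = f x y
    · exact Or.inr ⟨x, y, z, d, hxy, hxz, hxd, hyz, hyd, hzd, hSe, f x y, rfl, h.symm, by rw [s2, h2]⟩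
    left
    by_cases h3 : f d y = f x y
    · exact ⟨y, by simp [hSe], f x y, by rw [hSe]; grind⟩
    · have g1 := hf.gallai d x y hxd.symm hxy hyd.symm
      have g2 := hf.gallai d z y hzd.symm hyz.symm hyd.symm
      exact ⟨d, by simp [hSe], f d y, by rw [hSe]; grind⟩
  obtain ⟨x, y, z, d, hxy, hxz, hxd, hyz, hyd, hzd, hSe⟩ := Finset.card_eq_four.1 hS
  have s1 := hf.symm x y
  have s2 := hf.symm x z
  have s3 := hf.symm y z
  rcases hf.gallai x y z hxy hyz hxz with h | h | h
  · exact key x y z d hxy hxz hxd hyz hyd hzd hSe h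
  · exact key x z y d hxz hxy hxd hyz.symm hzd hyd (by rw [hSe]; ext; simp; tauto) (by grind)
  · exact key y x z d hxy.symm hyz hyd hxz hxd hzd (by rw [hSe]; ext; simp; tauto) (by grind)

/-- The step from four to five vertices when the four have a monochromatic spanning path instead of
a star. -/
theorem GoodColoring.hasStar_insert_path (hf : GoodColoring f) {a b c d w : α} {i : C}
    (hab : a ≠ b) (hac : a ≠ c) (had : a ≠ d) (hbc : b ≠ c) (hbd : b ≠ d) (hcd : c ≠ d)
    (hw : w ∉ ({a, b, c, d} : Finset α)) (h1 : f a b = i) (h2 : f b c = i) (h3 : f c d = i) :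
    HasStar f (insert w {a, b, c, d}) := by
  -- If `w b` also has color `i`, then either `b` is the centre of a star, or color `i` is exactly
  -- the double star with centres `b`, `c`. In that case all edges of the complete bipartite graph
  -- between `{a, w, b}` and `{d, c}`, except `b c`, get one color, and `b d a c w` is a path.
  have key : ∀ a b c d, a ≠ b → a ≠ c → a ≠ d → b ≠ c → b ≠ d → c ≠ d → w ≠ a → w ≠ b → w ≠ c →
      w ≠ d → f a b = i → f b c = i → f c d = i → f w b = i → f b d = i := by
    intro a b c d hab hac had hbc hbd hcd hwa hwb hwc hwd h1 h2 h3 h4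
    by_contra h5
    have sab := hf.symm a b
    have sac := hf.symm a c
    have sad := hf.symm a d
    have sbc := hf.symm b c
    have sbd := hf.symm b d
    have scd := hf.symm c d
    have swa := hf.symm w a
    have swb := hf.symm w b
    have swc := hf.symm w c
    have swd := hf.symm w d
    have n1 : f w d ≠ i := fun e => hf.noPath a b c d w hab hac had hwa.symm hbc hbd hwb.symm hcd
      hwc.symm hwd.symm i h1 h2 h3 (by rw [← swd, e])
    have n2 : f w c ≠ i := fun e => hf.noPath a b w c d hab hwa.symm hac had hwb.symm hbc hbd hwc
      hwd hcd i h1 (by rw [← swb, h4]) e h3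
    have n3 : f a c ≠ i := fun e => hf.noPath w b a c d hwb hwa hwc hwd hab.symm hbc hbd hac
      had hcd i h4 (by rw [← sab, h1]) e h3
    have n4 : f a d ≠ i := fun e => hf.noPath w b a d c hwb hwa hwd hwc hab.symm hbd hbc had
      hac hcd.symm i h4 (by rw [← sab, h1]) e (by rw [← scd, h3])
    have g1 := hf.gallai a b d hab hbd had
    have g2 := hf.gallai a c d hac hcd had
    have g3 := hf.gallai w b d hwb hbd hwd
    have g4 := hf.gallai w c d hwc hcd hwd
    exact hf.noPath b d a c w hbd hab.symm hbc hwb.symm had.symm hcd.symm hwd.symm hac hwa.symm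
      hwc.symm (f b d) rfl (by grind) (by grind) (by grind)
  simp only [Finset.mem_insert, Finset.mem_singleton, not_or] at hw
  obtain ⟨hwa, hwb, hwc, hwd⟩ := hw
  have sab := hf.symm a b
  have sac := hf.symm a c
  have sbc := hf.symm b c
  have scd := hf.symm c d
  have swb := hf.symm w b
  have swc := hf.symm w c
  have n1 : f w d ≠ i := fun e => hf.noPath a b c d w hab hac had (Ne.symm hwa) hbc hbd
    (Ne.symm hwb) hcd (Ne.symm hwc) (Ne.symm hwd) i h1 h2 h3 (by rw [hf.symm, e])
  have n2 : f w a ≠ i := fun e => hf.noPath w a b c d hwa hwb hwc hwd hab hac had hbc hbd hcd i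
    e h1 h2 h3
  by_cases h4 : f w b = i
  · have := key a b c d hab hac had hbc hbd hcd hwa hwb hwc hwd h1 h2 h3 h4
    exact ⟨b, by simp, i, by grind⟩
  by_cases h5 : f w c = i
  · have := key d c b a hcd.symm hbd.symm had.symm hbc.symm hac.symm hab.symm hwd hwc hwb hwa
      (by grind) (by grind) (by grind) h5
    exact ⟨c, by simp, i, by grind⟩
  have g1 := hf.gallai w a b hwa hab hwb
  have g2 := hf.gallai w b c hwb hbc hwc
  have g3 := hf.gallai w c d hwc hcd hwd
  exact ⟨w, by simp, f w a, by grind⟩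

theorem GoodColoring.star_of_five_le_card (hf : GoodColoring f) (n : ℕ) :
    ∀ S : Finset α, S.card = n + 5 → HasStar f S := by
  induction n with
  | zero =>
    intro S hS
    obtain ⟨w, T, hw, rfl, hT⟩ := Finset.card_eq_succ.1 hS
    rcases hf.star_or_path_of_card_four hT with h | h
    · exact hf.hasStar_insert hw hT.ge h
    · obtain ⟨a, b, c, d, hab, hac, had, hbc, hbd, hcd, rfl, i, h1, h2, h3⟩ := h
      exact hf.hasStar_insert_path hab hac had hbc hbd hcd hw h1 h2 h3
  | succ n ih =>
    intro S hS
    obtain ⟨w, T, hw, rfl, hT⟩ := Finset.card_eq_succ.1 hS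
    exact hf.hasStar_insert hw (by omega) (ih T hT)

/-! ### Counting cherry colors -/

open Classical in
/-- The colors `i` for which two edges of color `i` inside `S` share an endpoint. -/
noncomputable def cherryColors [Fintype C] (f : α → α → C) (S : Finset α) : Finset C :=
  {i | ∃ x ∈ S, ∃ y ∈ S, ∃ z ∈ S, x ≠ y ∧ y ≠ z ∧ x ≠ z ∧ f x y = i ∧ f y z = i}

/-- At least `|S| - 3` cherry colors occur in every `S` with `|S| ≥ 4`. -/
theorem GoodColoring.card_le_cherryColors [Fintype C] (hf : GoodColoring f) (n : ℕ) :
    ∀ S : Finset α, S.card = n + 4 → n + 1 ≤ (cherryColors f S).card := by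
  induction n with
  | zero =>
    intro S hS
    obtain ⟨x, y, z, d, hxy, hxz, -, hyz, -, -, rfl⟩ := Finset.card_eq_four.1 hS
    rw [zero_add, Nat.succ_le_iff, Finset.card_pos]
    have s1 := hf.symm x y
    have s2 := hf.symm y z
    rcases hf.gallai x y z hxy hyz hxz with h | h | h
    · exact ⟨f x y, by
        simp only [cherryColors, Finset.mem_filter_univ]
        exact ⟨x, by simp, y, by simp, z, by simp, hxy, hyz, hxz, rfl, h.symm⟩⟩
    · exact ⟨f x z, by
        simp only [cherryColors, Finset.mem_filter_univ]
        exact ⟨x, by simp, z, by simp, y, by simp, hxz, hyz.symm, hxy, rfl, by rw [← s2, h]⟩⟩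
    · exact ⟨f x z, by
        simp only [cherryColors, Finset.mem_filter_univ]
        exact ⟨y, by simp, x, by simp, z, by simp, hxy.symm, hxz, hyz, by rw [← s1, h], rfl⟩⟩
  | succ n ih =>
    intro S hS
    obtain ⟨v, hv, i, hi⟩ := hf.star_of_five_le_card n S (by omega)
    have hc : (S.erase v).card = n + 4 := by rw [Finset.card_erase_of_mem hv]; omega
    have hlt : cherryColors f (S.erase v) ⊂ cherryColors f S := by
      rw [Finset.ssubset_iff_of_subset]
      · obtain ⟨x, hx, y, hy, hxy⟩ := Finset.one_lt_card.1 (show 1 < (S.erase v).card by omega)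
        rw [Finset.mem_erase] at hx hy
        refine ⟨i, ?_, ?_⟩
        · simp only [cherryColors, Finset.mem_filter_univ]
          exact ⟨x, hx.2, v, hv, y, hy.2, hx.1, hy.1.symm, hxy, by rw [hf.symm, hi x hx.2 hx.1],
            hi y hy.2 hy.1⟩
        · simp only [cherryColors, Finset.mem_filter_univ]
          rintro ⟨x, hx, y, hy, z, hz, hxy, hyz, hxz, h1, h2⟩
          -- A fourth vertex `w` besides `v` exists since `|S| ≥ 5`.
          obtain ⟨w, hw, hw'⟩ := Finset.exists_mem_notMem_of_card_lt_card
            (show ({x, y, z} : Finset α).card < (S.erase v).card by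
              have := Finset.card_le_three (a := x) (b := y) (c := z); omega)
          simp only [Finset.mem_insert, Finset.mem_singleton, not_or] at hw'
          rw [Finset.mem_erase] at hx hy hz hw
          exact hf.noPath x y z v w hxy hxz hx.1 (Ne.symm hw'.1) hyz hy.1 (Ne.symm hw'.2.1) hz.1
            (Ne.symm hw'.2.2) hw.1.symm i h1 h2 (by rw [hf.symm, hi z hz.2 hz.1]) (hi w hw.2 hw.1)
      · intro j
        simp only [cherryColors, Finset.mem_filter_univ]
        rintro ⟨x, hx, y, hy, z, hz, h⟩
        exact ⟨x, Finset.mem_of_mem_erase hx, y, Finset.mem_of_mem_erase hy, z,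
          Finset.mem_of_mem_erase hz, h⟩
    have := Finset.card_lt_card hlt
    have := ih _ hc
    omega

end Upper

/-! ### Both bounds for `k + 4` -/

theorem hasMonoCopy_path_of_edges {N k : ℕ} {c : Sym2 (Fin N) → Fin k} {i : Fin k}
    {p : Fin 5 → Fin N} (hp : Function.Injective p) (h0 : c s(p 0, p 1) = i)
    (h1 : c s(p 1, p 2) = i) (h2 : c s(p 2, p 3) = i) (h3 : c s(p 3, p 4) = i) :
    HasMonoCopy c (SimpleGraph.pathGraph 5) i := by
  refine ⟨p, hp, fun u v huv => ?_⟩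
  rw [SimpleGraph.pathGraph_adj] at huv
  have h0' := h0
  have h1' := h1
  have h2' := h2
  have h3' := h3
  rw [Sym2.eq_swap] at h0' h1' h2' h3'
  fin_cases u <;> fin_cases v <;> simp at huv <;> assumption

/-- The extremal coloring: `xy` has color `max x y - 3`, with truncated subtraction, so that
vertices `0, 1, 2, 3` span a `K₄` of color `0`. -/
def extremalColoring {N k : ℕ} (h : N ≤ k + 3) (hk : 1 ≤ k) (e : Sym2 (Fin N)) : Fin k :=
  ⟨e.lift ⟨fun x y : Fin N => max (x : ℕ) y - 3, fun x y => by simp only [max_comm]⟩, by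
    induction e with
    | _ x y => simp only [Sym2.lift_mk]; omega⟩

theorem extremalColoring_val {N k : ℕ} (h : N ≤ k + 3) (hk : 1 ≤ k) (x y : Fin N) :
    (extremalColoring h hk s(x, y) : ℕ) = max (x : ℕ) y - 3 := rfl

/-- GR_k(P₅) = k + 4. -/
theorem stmt_11 (k : ℕ) (hk : 1 ≤ k) :
    IsLeast {N | 0 < N ∧
      GallaiRamseyProp (fun _ : Fin k => (⟨5, SimpleGraph.pathGraph 5⟩ : Σ V : ℕ, SimpleGraph (Fin V))) N} (k + 4) := by
  refine ⟨⟨by omega, fun c hc => ?_⟩, fun N hN => ?_⟩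
  · by_contra hno
    have hf : GoodColoring (fun x y => c s(x, y)) := by
      refine ⟨fun x y => by rw [Sym2.eq_swap], hc, ?_⟩
      intro a b d e g hab had hae hag hbd hbe hbg hde hdg heg i h0 h1 h2 h3
      refine hno ⟨i, hasMonoCopy_path_of_edges (p := ![a, b, d, e, g]) ?_ h0 h1 h2 h3⟩
      intro u v huv
      fin_cases u <;> fin_cases v <;> simp_all
    have h1 := hf.card_le_cherryColors k Finset.univ (by simp)
    have h2 := Finset.card_le_univ (cherryColors (fun x y => c s(x, y)) Finset.univ)
    rw [Fintype.card_fin] at h2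
    omega
  · by_contra hlt
    have hle : N ≤ k + 3 := by omega
    obtain ⟨i, p, hp, h⟩ := hN.2 (extremalColoring hle hk) (by
      intro x y z _ _ _
      simp only [Fin.ext_iff, extremalColoring_val]
      omega)
    have e : ∀ u v : Fin 5, (u : ℕ) + 1 = v → max (p u : ℕ) (p v) - 3 = i := fun u v huv => by
      rw [← h u v (SimpleGraph.pathGraph_adj.2 (Or.inl huv)), extremalColoring_val]
    have ne : ∀ u v : Fin 5, u ≠ v → (p u : ℕ) ≠ p v := fun u v huv he =>
      huv (hp (Fin.ext he))
    have e0 := e 0 1 rfl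
    have e1 := e 1 2 rfl
    have e2 := e 2 3 rfl
    have e3 := e 3 4 rfl
    have n01 := ne 0 1 (by decide)
    have n02 := ne 0 2 (by decide)
    have n03 := ne 0 3 (by decide)
    have n04 := ne 0 4 (by decide)
    have n12 := ne 1 2 (by decide)
    have n13 := ne 1 3 (by decide)
    have n14 := ne 1 4 (by decide)
    have n23 := ne 2 3 (by decide)
    have n24 := ne 2 4 (by decide)
    have n34 := ne 3 4 (by decide)
    -- For `i ≠ 0` the disjoint edges `p 0 p 1` and `p 2 p 3` would share the vertex `i + 3`; for
    -- `i = 0` five distinct vertices would lie in `{0, 1, 2, 3}`.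
    omega
end

section
/- For every integer k ≥ 1, GR_k(M_3) = 2k + 4, where M_3 is a matching of size 3; that is, the least positive integer N such that every Gallai k-coloring of K_N contains 3 pairwise vertex-disjoint edges all of the same color equals 2k + 4. -/
/-- The graph `G` contains no three pairwise disjoint edges. -/
def NoThreeMatching {V : Type*} (G : SimpleGraph V) : Prop :=
  ∀ a b c d e f : V, [a, b, c, d, e, f].Nodup → G.Adj a b → G.Adj c d → G.Adj e f → False

open Classical in
/-- The ordered adjacent pairs of `G` both of whose entries avoid `S`; each edge counts twice. -/
noncomputable def pairsAvoiding {V : Type*} [Fintype V] (G : SimpleGraph V) (S : Finset V) :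
    Finset (V × V) :=
  Finset.univ.filter fun p => G.Adj p.1 p.2 ∧ p.1 ∉ S ∧ p.2 ∉ S

/-- With `A` and `B` the outside neighborhoods of the ends of a matching edge, this bounds the
number of outgoing edges when no augmenting path passes through that edge. -/
lemma card_add_card_le_of_forall_eq {V : Type*} {A B : Finset V} {n : ℕ} (hn : 2 ≤ n)
    (hA : A.card ≤ n) (hB : B.card ≤ n) (h : ∀ a ∈ A, ∀ b ∈ B, a = b) :
    A.card + B.card ≤ n := by
  rcases A.eq_empty_or_nonempty with rfl | ⟨a, ha⟩
  · simpa using hB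
  rcases B.eq_empty_or_nonempty with rfl | ⟨b, hb⟩
  · simpa using hA
  have h1 : A.card ≤ 1 := Finset.card_le_one.2 fun u hu v hv => (h u hu b hb).trans (h v hv b hb).symm
  have h2 : B.card ≤ 1 := Finset.card_le_one.2 fun u hu v hv => (h a ha u hu).symm.trans (h a ha v hv)
  omega

/-- If all edges avoiding `S` meet the pair `{x, y}`, and `x`, `y` have at most `d` neighbors
outside `S`, then at most `4 d` ordered adjacent pairs avoid `S`. -/
lemma card_pairsAvoiding_le {V : Type*} [Fintype V] (G : SimpleGraph V) (S : Finset V) (x y : V)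
    (d : ℕ) (A B : Finset V) (hA : A.card ≤ d) (hB : B.card ≤ d)
    (hxA : ∀ u, G.Adj x u → u ∉ S → u ∈ A) (hyB : ∀ u, G.Adj y u → u ∉ S → u ∈ B)
    (h : ∀ u v, G.Adj u v → u ∉ S → v ∉ S → u = x ∨ u = y ∨ v = x ∨ v = y) :
    (pairsAvoiding G S).card ≤ 4 * d := by
  classical
  have hsub : pairsAvoiding G S ⊆
      (({x} ×ˢ A) ∪ ({y} ×ˢ B)) ∪ ((A ×ˢ {x}) ∪ (B ×ˢ {y})) := by
    rintro ⟨u, v⟩ hp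
    simp only [pairsAvoiding, Finset.mem_filter, Finset.mem_univ, true_and] at hp
    obtain ⟨huv, hu, hv⟩ := hp
    simp only [Finset.mem_union, Finset.mem_product, Finset.mem_singleton]
    rcases h u v huv hu hv with rfl | rfl | rfl | rfl
    · exact Or.inl (Or.inl ⟨rfl, hxA _ huv hv⟩)
    · exact Or.inl (Or.inr ⟨rfl, hyB _ huv hv⟩)
    · exact Or.inr (Or.inl ⟨hxA _ huv.symm hu, rfl⟩)
    · exact Or.inr (Or.inr ⟨hyB _ huv.symm hu, rfl⟩)
  have h1 := Finset.card_le_card hsub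
  have h2 := Finset.card_union_le (({x} ×ˢ A) ∪ ({y} ×ˢ B)) ((A ×ˢ {x}) ∪ (B ×ˢ {y}))
  have h3 := Finset.card_union_le ({x} ×ˢ A) ({y} ×ˢ B)
  have h4 := Finset.card_union_le (A ×ˢ {x}) (B ×ˢ {y})
  simp only [Finset.card_product, Finset.card_singleton, one_mul, mul_one] at h3 h4
  omega

/-- A graph of maximum degree at most four without three disjoint edges has at most `13` edges. -/
lemma card_pairsAvoiding_empty_le {V : Type*} [Fintype V] (G : SimpleGraph V)
    (hG : NoThreeMatching G) (N : V → Finset V) (hN : ∀ u v, v ∈ N u ↔ G.Adj u v)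
    (hdeg : ∀ v, (N v).card ≤ 4) : (pairsAvoiding G ∅).card ≤ 26 := by
  classical
  by_cases h2 : ∃ x y z w, [x, y, z, w].Nodup ∧ G.Adj x y ∧ G.Adj z w
  · obtain ⟨x, y, z, w, hd, hxy, hzw⟩ := h2
    set C : Finset V := {x, y, z, w} with hC
    have hCcard : C.card ≤ 4 := Finset.card_le_four
    -- The partner of a matched vertex takes up one of its at most four neighbors.
    have hout : ∀ u v, v ∈ C → G.Adj u v → (N u \ C).card ≤ 3 := by
      intro u v hv huv
      have hlt : (N u \ C).card < (N u).card := by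
        apply Finset.card_lt_card
        refine ⟨Finset.sdiff_subset, fun hs => ?_⟩
        have := hs ((hN u v).2 huv)
        simp [hv] at this
      have := hdeg u
      omega
    -- Two distinct outside neighbors of the ends of a matching edge would augment the matching.
    have hA : (N x \ C).card + (N y \ C).card ≤ 3 := by
      refine card_add_card_le_of_forall_eq (by norm_num) (hout x y (by simp [hC]) hxy)
        (hout y x (by simp [hC]) hxy.symm) fun a ha b hb => ?_
      by_contra hab
      simp only [hC, Finset.mem_sdiff, hN, Finset.mem_insert, Finset.mem_singleton, not_or] at ha hb
      refine hG x a y b z w ?_ ha.1 hb.1 hzw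
      simp only [List.nodup_cons, List.mem_cons, List.not_mem_nil, or_false, not_or,
        List.nodup_nil, not_false_eq_true, and_true] at hd ⊢
      grind
    have hB : (N z \ C).card + (N w \ C).card ≤ 3 := by
      refine card_add_card_le_of_forall_eq (by norm_num) (hout z w (by simp [hC]) hzw)
        (hout w z (by simp [hC]) hzw.symm) fun a ha b hb => ?_
      by_contra hab
      simp only [hC, Finset.mem_sdiff, hN, Finset.mem_insert, Finset.mem_singleton, not_or] at ha hb
      refine hG z a w b x y ?_ ha.1 hb.1 hxy
      simp only [List.nodup_cons, List.mem_cons, List.not_mem_nil, or_false, not_or,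
        List.nodup_nil, not_false_eq_true, and_true] at hd ⊢
      grind
    set O : Finset (V × V) := C.biUnion fun u => {u} ×ˢ (N u \ C) with hO
    have hOcard : O.card ≤ 6 := by
      have h1 : O.card ≤ ∑ u ∈ C, (N u \ C).card := by
        refine Finset.card_biUnion_le.trans (le_of_eq ?_)
        simp
      have h2 : ∑ u ∈ C, (N u \ C).card =
          (N x \ C).card + (N y \ C).card + ((N z \ C).card + (N w \ C).card) := by
        simp only [List.nodup_cons, List.mem_cons, List.not_mem_nil, or_false, not_or,
          List.nodup_nil, not_false_eq_true, and_true] at hd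
        conv_lhs => rw [hC]
        rw [Finset.sum_insert (by simp [hd.1]), Finset.sum_insert (by simp [hd.2.1]),
          Finset.sum_insert (by simp [hd.2.2]), Finset.sum_singleton, ← hC]
        ring
      omega
    have hsub : pairsAvoiding G ∅ ⊆ C.offDiag ∪ (O ∪ O.image Prod.swap) := by
      rintro ⟨u, v⟩ hp
      simp only [pairsAvoiding, Finset.mem_filter, Finset.mem_univ, true_and] at hp
      have huv := hp.1
      have hor : u ∈ C ∨ v ∈ C := by
        by_contra hcon
        simp only [hC, Finset.mem_insert, Finset.mem_singleton, not_or] at hcon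
        refine hG x y z w u v ?_ hxy hzw huv
        have := huv.ne
        simp only [List.nodup_cons, List.mem_cons, List.not_mem_nil, or_false, not_or,
          List.nodup_nil, not_false_eq_true, and_true] at hd ⊢
        grind
      have hmem : ∀ a b, a ∈ C → b ∉ C → G.Adj a b → (a, b) ∈ O := by
        intro a b ha hb hab
        simp only [hO, Finset.mem_biUnion, Finset.mem_product, Finset.mem_singleton,
          Finset.mem_sdiff, hN]
        exact ⟨a, ha, rfl, hab, hb⟩
      by_cases hu : u ∈ C
      · by_cases hv : v ∈ C
        · exact Finset.mem_union_left _ (Finset.mem_offDiag.2 ⟨hu, hv, huv.ne⟩)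
        · exact Finset.mem_union_right _ (Finset.mem_union_left _ (hmem u v hu hv huv))
      · have hv := hor.resolve_left hu
        exact Finset.mem_union_right _ (Finset.mem_union_right _
          (Finset.mem_image.2 ⟨(v, u), hmem v u hv hu huv.symm, rfl⟩))
    have h1 := Finset.card_le_card hsub
    have h2 := Finset.card_union_le C.offDiag (O ∪ O.image Prod.swap)
    have h3 := Finset.card_union_le O (O.image Prod.swap)
    have h4 : (O.image Prod.swap).card ≤ O.card := Finset.card_image_le
    have h5 : C.offDiag.card ≤ 12 := by
      rw [Finset.offDiag_card]
      generalize C.card = n at hCcard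
      interval_cases n <;> norm_num
    omega
  · by_cases h1 : ∃ x y, G.Adj x y
    · obtain ⟨x, y, hxy⟩ := h1
      refine (card_pairsAvoiding_le G ∅ x y 4 (N x) (N y) (hdeg x) (hdeg y)
        (fun u hu _ => (hN x u).2 hu) (fun u hu _ => (hN y u).2 hu) ?_).trans (by norm_num)
      intro u v huv _ _
      by_contra hcon
      refine h2 ⟨x, y, u, v, ?_, hxy, huv⟩
      have := huv.ne
      have := hxy.ne
      simp only [List.nodup_cons, List.mem_cons, List.not_mem_nil, or_false, not_or,
        List.nodup_nil, not_false_eq_true, and_true] at hcon ⊢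
      grind
    · have : pairsAvoiding G ∅ = ∅ := by
        apply Finset.eq_empty_of_forall_notMem
        rintro ⟨u, v⟩ hp
        simp only [pairsAvoiding, Finset.mem_filter] at hp
        exact h1 ⟨u, v, hp.2.1⟩
      simp [this]

/-- The structural core of the upper bound. A vertex of degree at least five extends every
matching of two edges avoiding it, so it may be put into `S`; after that, a vertex of degree at
least three extends every remaining edge. When no such vertices exist, few edges are left. -/
lemma exists_small_cover {V : Type*} [Fintype V] (G : SimpleGraph V) (hG : NoThreeMatching G) :
    ∃ S : Finset V, S.card ≤ 2 ∧ (pairsAvoiding G S).card ≤ 13 * (2 - S.card) := by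
  classical
  obtain ⟨N, hN⟩ : ∃ N : V → Finset V, ∀ u v, v ∈ N u ↔ G.Adj u v :=
    ⟨fun u => Finset.univ.filter fun v => G.Adj u v, by simp⟩
  by_cases hdeg : ∀ v, (N v).card ≤ 4
  · exact ⟨∅, by simp, by simpa using card_pairsAvoiding_empty_le G hG N hN hdeg⟩
  push Not at hdeg
  obtain ⟨v, hv⟩ := hdeg
  have hno2 : ∀ x y z w, [v, x, y, z, w].Nodup → G.Adj x y → G.Adj z w → False := by
    intro x y z w hd hxy hzw
    obtain ⟨a, ha, ha'⟩ := Finset.exists_mem_notMem_of_card_lt_card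
      (s := ({x, y, z, w} : Finset V)) (t := N v) (Finset.card_le_four.trans_lt hv)
    have hva := (hN v a).1 ha
    have := hva.ne
    refine hG v a x y z w ?_ hva hxy hzw
    simp only [Finset.mem_insert, Finset.mem_singleton, not_or] at ha'
    simp only [List.nodup_cons, List.mem_cons, List.not_mem_nil, or_false, not_or,
      List.nodup_nil, not_false_eq_true, and_true] at hd ⊢
    grind
  by_cases hdeg' : ∃ w, w ≠ v ∧ 3 ≤ ((N w).erase v).card
  · obtain ⟨w, hwv, hw⟩ := hdeg'
    have hempty : pairsAvoiding G {v, w} = ∅ := by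
      apply Finset.eq_empty_of_forall_notMem
      rintro ⟨x, y⟩ hp
      simp only [pairsAvoiding, Finset.mem_filter, Finset.mem_univ, true_and, Finset.mem_insert,
        Finset.mem_singleton, not_or] at hp
      obtain ⟨hxy, hx, hy⟩ := hp
      obtain ⟨a, ha, ha'⟩ := Finset.exists_mem_notMem_of_card_lt_card
        (s := ({x, y} : Finset V)) (t := (N w).erase v) (Finset.card_le_two.trans_lt hw)
      rw [Finset.mem_erase, hN] at ha
      have := ha.2.ne
      have := hxy.ne
      refine hno2 w a x y ?_ ha.2 hxy
      simp only [Finset.mem_insert, Finset.mem_singleton, not_or] at ha'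
      simp only [List.nodup_cons, List.mem_cons, List.not_mem_nil, or_false, not_or,
        List.nodup_nil, not_false_eq_true, and_true]
      grind
    exact ⟨{v, w}, Finset.card_le_two, by simp [hempty]⟩
  push Not at hdeg'
  refine ⟨{v}, by simp, ?_⟩
  rcases (pairsAvoiding G {v}).eq_empty_or_nonempty with h0 | ⟨⟨x, y⟩, hp⟩
  · simp [h0]
  simp only [pairsAvoiding, Finset.mem_filter, Finset.mem_univ, true_and,
    Finset.mem_singleton] at hp
  obtain ⟨hxy, hx, hy⟩ := hp
  refine (card_pairsAvoiding_le G {v} x y 2 ((N x).erase v) ((N y).erase v)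
    (Nat.le_of_lt_succ (hdeg' x hx)) (Nat.le_of_lt_succ (hdeg' y hy)) ?_ ?_ ?_).trans (by simp)
  · intro u hu huv
    exact Finset.mem_erase.2 ⟨by simpa using huv, (hN x u).2 hu⟩
  · intro u hu huv
    exact Finset.mem_erase.2 ⟨by simpa using huv, (hN y u).2 hu⟩
  · intro a b hab ha hb
    rw [Finset.mem_singleton] at ha hb
    by_contra hcon
    have := hab.ne
    have := hxy.ne
    refine hno2 x y a b ?_ hxy hab
    simp only [List.nodup_cons, List.mem_cons, List.not_mem_nil, or_false, not_or,
      List.nodup_nil, not_false_eq_true, and_true]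
    grind

/-- The graph of the edges of color `i`. -/
def colorGraph {N k : ℕ} (c : Sym2 (Fin N) → Fin k) (i : Fin k) : SimpleGraph (Fin N) where
  Adj u v := u ≠ v ∧ c s(u, v) = i
  symm := ⟨fun u v h => ⟨h.1.symm, by rw [Sym2.eq_swap]; exact h.2⟩⟩
  loopless := ⟨fun _ h => h.1 rfl⟩

lemma hasMonoCopy_of_not_noThreeMatching {N k : ℕ} (c : Sym2 (Fin N) → Fin k) (i : Fin k)
    (h : ¬ NoThreeMatching (colorGraph c i)) : HasMonoCopy c (matchingGraph 3) i := by
  unfold NoThreeMatching at h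
  push Not at h
  obtain ⟨a, b, x, y, z, w, hd, h1, h2, h3, -⟩ := h
  have hab : c s(a, b) = i := h1.2
  have hxy : c s(x, y) = i := h2.2
  have hzw : c s(z, w) = i := h3.2
  have hba : c s(b, a) = i := by rw [Sym2.eq_swap]; exact hab
  have hyx : c s(y, x) = i := by rw [Sym2.eq_swap]; exact hxy
  have hwz : c s(w, z) = i := by rw [Sym2.eq_swap]; exact hzw
  refine ⟨([a, b, x, y, z, w] : List (Fin N)).get, List.nodup_iff_injective_get.1 hd, ?_⟩
  intro u v huv
  rw [matchingGraph, SimpleGraph.fromRel_adj] at huv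
  change Fin 6 at u v
  fin_cases u <;> fin_cases v <;> simp_all

lemma exists_mono_matching {k : ℕ} (c : Sym2 (Fin (2 * k + 4)) → Fin k) :
    ∃ i, HasMonoCopy c (matchingGraph 3) i := by
  classical
  by_contra hcon
  push Not at hcon
  have hno : ∀ i, NoThreeMatching (colorGraph c i) := fun i => by
    by_contra h
    exact hcon i (hasMonoCopy_of_not_noThreeMatching c i h)
  choose S hS hp using fun i => exists_small_cover _ (hno i)
  set m : ℕ := ∑ i, (2 - (S i).card) with hm
  set T : Finset (Fin (2 * k + 4)) := Finset.univ.biUnion S with hT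
  have hTm : T.card + m ≤ 2 * k := by
    have h1 : T.card ≤ ∑ i, (S i).card := Finset.card_biUnion_le
    have h2 : ∑ i, (S i).card + m = 2 * k := by
      rw [hm, ← Finset.sum_add_distrib,
        Finset.sum_congr rfl fun i _ => Nat.add_sub_cancel' (hS i)]
      simp [mul_comm]
    omega
  have hR : Tᶜ.card = 2 * k + 4 - T.card := by rw [Finset.card_compl, Fintype.card_fin]
  -- Every pair of vertices outside `T` is counted by the bound for its own color.
  have hsub : Tᶜ.offDiag ⊆ Finset.univ.biUnion fun i => pairsAvoiding (colorGraph c i) (S i) := by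
    rintro ⟨u, v⟩ huv
    rw [Finset.mem_offDiag] at huv
    obtain ⟨hu, hv, hne⟩ := huv
    simp only [hT, Finset.mem_compl, Finset.mem_biUnion, Finset.mem_univ, true_and,
      not_exists] at hu hv
    simp only [Finset.mem_biUnion, Finset.mem_univ, true_and, pairsAvoiding, Finset.mem_filter]
    exact ⟨c s(u, v), ⟨hne, rfl⟩, hu _, hv _⟩
  have hle : Tᶜ.offDiag.card ≤ 13 * m := by
    rw [hm, Finset.mul_sum]
    exact (Finset.card_le_card hsub).trans
      (Finset.card_biUnion_le.trans (Finset.sum_le_sum fun i _ => hp i))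
  rw [Finset.offDiag_card] at hle
  obtain ⟨r, hr⟩ : ∃ r, Tᶜ.card = m + 4 + r := ⟨Tᶜ.card - (m + 4), by omega⟩
  rw [hr, Nat.sub_le_iff_le_add] at hle
  zify at hle
  nlinarith [sq_nonneg ((m : ℤ) - 3)]

/-- The extremal coloring: the color of an edge is `(max - 3) / 2` (truncated at `0`). So color
`0` is a `K₅` on the vertices `0, …, 4`, and color `i ≥ 1` joins the vertices `2i + 3` and `2i + 4`
to each other and to all smaller vertices. -/
def lowerColoring {N k : ℕ} (hk : 1 ≤ k) (hN : N ≤ 2 * k + 3) : Sym2 (Fin N) → Fin k :=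
  Sym2.lift ⟨fun u v => ⟨(max u.val v.val - 3) / 2, by omega⟩, fun u v => by
    simp only [max_comm]⟩

lemma lowerColoring_val {N k : ℕ} (hk : 1 ≤ k) (hN : N ≤ 2 * k + 3) (u v : Fin N) :
    (lowerColoring hk hN s(u, v) : ℕ) = (max u.val v.val - 3) / 2 := rfl

lemma lowerColoring_isGallai {N k : ℕ} (hk : 1 ≤ k) (hN : N ≤ 2 * k + 3) :
    IsGallai (lowerColoring hk hN) := by
  intro x y z _ _ _
  simp only [Fin.ext_iff, lowerColoring_val]
  -- The two edges at the largest vertex of the triangle have the same color.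
  have h : max x.val y.val = max y.val z.val ∨ max y.val z.val = max x.val z.val ∨
      max x.val y.val = max x.val z.val := by omega
  rcases h with h | h | h <;> simp [h]

lemma lowerColoring_not_hasMonoCopy {N k : ℕ} (hk : 1 ≤ k) (hN : N ≤ 2 * k + 3) (i : Fin k) :
    ¬ HasMonoCopy (lowerColoring hk hN) (matchingGraph 3) i := by
  rintro ⟨f, hf, hc⟩
  have hne : ∀ u v : Fin (2 * 3), u ≠ v → (f u).val ≠ (f v).val := fun u v huv h =>
    huv (hf (Fin.ext h))
  have hcol : ∀ u v : Fin (2 * 3), u ≠ v → u.val / 2 = v.val / 2 →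
      (max (f u).val (f v).val - 3) / 2 = i.val := by
    intro u v huv h
    rw [← lowerColoring_val hk hN, hc u v]
    rw [matchingGraph, SimpleGraph.fromRel_adj]
    exact ⟨huv, Or.inl h⟩
  have e1 := hcol 0 1 (by decide) (by decide)
  have e2 := hcol 2 3 (by decide) (by decide)
  have e3 := hcol 4 5 (by decide) (by decide)
  have n02 := hne 0 2 (by decide)
  have n03 := hne 0 3 (by decide)
  have n04 := hne 0 4 (by decide)
  have n05 := hne 0 5 (by decide)
  have n12 := hne 1 2 (by decide)
  have n13 := hne 1 3 (by decide)
  have n14 := hne 1 4 (by decide)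
  have n15 := hne 1 5 (by decide)
  have n24 := hne 2 4 (by decide)
  have n25 := hne 2 5 (by decide)
  have n34 := hne 3 4 (by decide)
  have n35 := hne 3 5 (by decide)
  rcases Nat.eq_zero_or_pos i.val with hi | hi
  · -- Color `0`: six distinct vertices among `0, …, 4`.
    have hlt : ∀ u : Fin (2 * 3), (f u).val < 5 := by
      have h : ∀ a b : ℕ, (max a b - 3) / 2 = i.val → a < 5 ∧ b < 5 := by
        intro a b hab
        omega
      intro u
      fin_cases u
      exacts [(h _ _ e1).1, (h _ _ e1).2, (h _ _ e2).1, (h _ _ e2).2, (h _ _ e3).1, (h _ _ e3).2]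
    have := Fintype.card_le_of_injective (fun u => (⟨(f u).val, hlt u⟩ : Fin 5))
      fun u v huv => hf (Fin.ext (by simpa using huv))
    simp at this
  · -- The larger endpoints are three distinct numbers in `{2i + 3, 2i + 4}`.
    have hrange : ∀ n : ℕ, (n - 3) / 2 = i.val → n = 2 * i.val + 3 ∨ n = 2 * i.val + 4 := by
      intro n hn
      omega
    have hmax : ∀ a b c d : ℕ, a ≠ c → a ≠ d → b ≠ c → b ≠ d → max a b ≠ max c d := by
      intro a b c d _ _ _ _
      omega
    have d1 := hmax _ _ _ _ n02 n03 n12 n13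
    have d2 := hmax _ _ _ _ n04 n05 n14 n15
    have d3 := hmax _ _ _ _ n24 n25 n34 n35
    rcases hrange _ e1 with b1 | b1 <;> rcases hrange _ e2 with b2 | b2 <;>
      rcases hrange _ e3 with b3 | b3 <;> rw [b1, b2] at d1 <;> rw [b1, b3] at d2 <;>
      rw [b2, b3] at d3 <;> contradiction

/-- GR_k(M₃) = 2k + 4. -/
theorem stmt_12 (k : ℕ) (hk : 1 ≤ k) :
    IsLeast {N | 0 < N ∧
      GallaiRamseyProp (fun _ : Fin k => (⟨2 * 3, matchingGraph 3⟩ : Σ V : ℕ, SimpleGraph (Fin V))) N} (2 * k + 4) := by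
  refine ⟨⟨by omega, fun c _ => exists_mono_matching c⟩, fun N hN => ?_⟩
  by_contra hlt
  have hN' : N ≤ 2 * k + 3 := by omega
  obtain ⟨i, hi⟩ := hN.2 (lowerColoring hk hN') (lowerColoring_isGallai hk hN')
  exact lowerColoring_not_hasMonoCopy hk hN' i hi
end

section
/- For every integer k ≥ 1, GR_k(M_4) = 3k + 5, where M_4 is a matching of size 4; that is, the least positive integer N such that every Gallai k-coloring of K_N contains 4 pairwise vertex-disjoint edges all of the same color equals 3k + 5. -/
open Finset in
/-- The vertices covered by a matching that is encoded as an involution, i.e. its moved points. -/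
def covered {V : Type*} [Fintype V] [DecidableEq V] (m : V → V) : Finset V :=
  univ.filter fun v => m v ≠ v

/-- A matching inside the vertex set `W` of the graph with adjacency relation `A`, encoded as the
involution exchanging the two ends of every matching edge and fixing the uncovered vertices. -/
structure IsMat {V : Type*} (A : V → V → Prop) (W : Finset V) (m : V → V) : Prop where
  inv : ∀ v, m (m v) = v
  adj : ∀ v, m v ≠ v → v ∈ W ∧ A v (m v)

section
open Finset
variable {V : Type*} [Fintype V] [DecidableEq V] {A : V → V → Prop} {W : Finset V}

theorem mem_covered {m : V → V} {v : V} : v ∈ covered m ↔ m v ≠ v := by simp [covered]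

theorem even_covered {m : V → V} (h : ∀ v, m (m v) = v) : Even (covered m).card := by
  have := Finset.sum_involution (s := covered m) (f := fun _ => (1 : ZMod 2)) (fun a _ => m a)
    (by intros; decide) (by intro a ha _; exact mem_covered.1 ha)
    (by intro a ha; rw [mem_covered] at *; rw [h]; exact ha.symm) (by intro a _; exact h a)
  simp only [sum_const, nsmul_eq_mul, mul_one] at this
  exact (ZMod.natCast_eq_zero_iff_even).1 this

theorem IsMat.add_edge {m : V → V} (hs : ∀ x y, A x y → A y x) (hm : IsMat A W m) {x y : V}
    (hx : x ∈ W) (hy : y ∈ W) (hxy : x ≠ y) (ha : A x y) (h1 : m x = x) (h2 : m y = y) :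
    ∃ m', IsMat A W m' ∧ (covered m').card = (covered m).card + 2 := by
  have hi := hm.inv
  have hd := hm.adj
  refine ⟨fun v => if v = x then y else if v = y then x else m v, ⟨?_, ?_⟩, ?_⟩
  · intro v; grind
  · intro v; grind
  · have : covered (fun v => if v = x then y else if v = y then x else m v)
        = insert x (insert y (covered m)) := by
      ext v; simp only [mem_insert, mem_covered]; grind
    rw [this, card_insert_of_notMem, card_insert_of_notMem]
    · simp [mem_covered, h2]
    · simp [mem_covered, h1, hxy]

/-- Replacing the edge at `y` by the edge `xy`, where `x` was uncovered. -/
theorem IsMat.switch {n : V → V} (hs : ∀ x y, A x y → A y x) (hn : IsMat A W n) {x y : V}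
    (hx : x ∈ W) (ha : A x y) (h1 : n x = x) (h2 : n y ≠ y) :
    IsMat A W (fun v => if v = x then y else if v = y then x else if v = n y then v else n v) ∧
    (covered (fun v => if v = x then y else if v = y then x else if v = n y then v else n v)).card
      = (covered n).card := by
  have hi := hn.inv
  have hd := hn.adj
  refine ⟨⟨?_, ?_⟩, ?_⟩
  · intro v; grind
  · intro v; grind
  · have : covered (fun v => if v = x then y else if v = y then x else if v = n y then v else n v)
        = insert x ((covered n).erase (n y)) := by
      ext v; simp only [mem_insert, mem_covered, mem_erase]; grind
    have hz : n y ∈ covered n := by rw [mem_covered, hi]; exact h2.symm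
    rw [this, card_insert_of_notMem (by simp [mem_covered, h1]), card_erase_add_one hz]

/-- The step behind Gallai's lemma: if some maximum matching `n` misses `w`, then no maximum
matching `m` misses two neighbours of `w`. The matching `n` is moved towards `m` by switches that
keep it maximum and keep `w` uncovered, so the disagreement between the two strictly decreases. -/
theorem gallai_step (hs : ∀ x y, A x y → A y x) {s : ℕ}
    (hmax : ∀ m, IsMat A W m → (covered m).card ≤ s) {m : V → V} (hm : IsMat A W m)
    (hms : (covered m).card = s) {u u' w : V} (huu : u ≠ u') (hu : m u = u) (hu' : m u' = u')
    (hw : w ∈ W) (huW : u ∈ W) (huW' : u' ∈ W) (hwu : w ≠ u) (hwu' : w ≠ u')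
    (h1 : A w u) (h2 : A w u') :
    ∀ d (n : V → V), ((covered m).filter fun v => n v ≠ m v).card = d → IsMat A W n →
      (covered n).card = s → n w = w → False := by
  intro d
  induction d using Nat.strong_induction_on with
  | _ d ih =>
  intro n hd hn hns hnw
  have key : ∀ x y, x ∈ W → y ∈ W → x ≠ y → A x y → n x = x → n y ≠ y := by
    intro x y hx hy hxy ha h1 h2
    obtain ⟨n', hn', hc⟩ := hn.add_edge hs hx hy hxy ha h1 h2
    have := hmax n' hn'
    omega
  have c1 : n u ≠ u := key w u hw huW hwu h1 hnw
  have c2 : n u' ≠ u' := key w u' hw huW' hwu' h2 hnw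
  -- `n` covers two vertices missed by `m`, so `m` covers two missed by `n`, one of them not `w`.
  have hcard : 1 < (covered m \ covered n).card := by
    have e : (covered m \ covered n).card = (covered n \ covered m).card :=
      card_sdiff_comm (hms.trans hns.symm)
    rw [e, one_lt_card]
    exact ⟨u, by simp [mem_covered, c1, hu], u', by simp [mem_covered, c2, hu'], huu⟩
  obtain ⟨x, hx, hxw⟩ := exists_mem_ne hcard w
  simp only [mem_sdiff, mem_covered, not_not] at hx
  obtain ⟨hmx, hnx⟩ := hx
  have hi := hm.inv
  have hxW := hm.adj x hmx
  have hyW := hm.adj (m x) (by rw [hi]; exact hmx.symm)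
  have c3 := key x (m x) hxW.1 hyW.1 hmx.symm hxW.2 hnx
  obtain ⟨hn', hc'⟩ := hn.switch hs hxW.1 hxW.2 hnx c3
  refine ih _ ?_ _ rfl hn' (hc'.trans hns) ?_
  · rw [← hd]
    apply card_lt_card
    rw [ssubset_iff_of_subset]
    · refine ⟨x, ?_, ?_⟩
      · simp only [mem_filter, mem_covered]; grind
      · simp
    · have hni := hn.inv
      intro v
      simp only [mem_filter, mem_covered]
      grind
  · grind

/-- If every vertex of `W` is missed by some maximum matching, and maximum matchings cover
`s` vertices, then there are at most `s (s + 1)` ordered pairs of adjacent vertices. For a maximum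
matching `m`, covered vertices have degree at most `s`, and each covered vertex has
at most one uncovered neighbour. -/
theorem edge_bound [DecidableRel A] (hs : ∀ x y, A x y → A y x) (hirr : ∀ x, ¬ A x x) {s : ℕ}
    (hmax : ∀ m, IsMat A W m → (covered m).card ≤ s)
    (hmiss : ∀ w ∈ W, ∃ m, IsMat A W m ∧ (covered m).card = s ∧ m w = w) :
    ((W ×ˢ W).filter fun p => A p.1 p.2).card ≤ s * (s + 1) := by
  rcases W.eq_empty_or_nonempty with rfl | ⟨w₀, hw₀⟩
  · simp
  obtain ⟨m, hm, hms, -⟩ := hmiss w₀ hw₀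
  have cov : ∀ n, IsMat A W n → (covered n).card = s → ∀ u ∈ W, ∀ w ∈ W, A u w → n u = u →
      w ∈ covered n := by
    intro n hn hns u hu w hw ha h1
    rw [mem_covered]
    intro h2
    have hne : u ≠ w := by rintro rfl; exact hirr _ ha
    obtain ⟨n', hn', hc⟩ := hn.add_edge hs hu hw hne ha h1 h2
    have := hmax n' hn'
    omega
  have hsub : ((W ×ˢ W).filter fun p => A p.1 p.2) ⊆
      ((covered m).biUnion fun u => (W.filter fun w => A u w ∧ u ∈ W).image fun w => (u, w)) ∪
        ((W ×ˢ W).filter fun p => A p.1 p.2 ∧ m p.1 = p.1) := by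
    rintro ⟨u, w⟩ h
    simp only [mem_filter, mem_product] at h
    simp only [mem_union, mem_biUnion, mem_image, mem_filter, mem_product, mem_covered]
    by_cases hu : m u = u
    · right; exact ⟨h.1, h.2, hu⟩
    · left; exact ⟨u, hu, w, ⟨h.1.2, h.2, h.1.1⟩, rfl⟩
  have b1 : ((covered m).biUnion fun u =>
      (W.filter fun w => A u w ∧ u ∈ W).image fun w => (u, w)).card ≤ s * s := by
    rw [← hms]
    refine card_biUnion_le_card_mul _ _ _ fun u _ => card_image_le.trans ?_
    by_cases hu : u ∈ W
    · obtain ⟨n, hn, hns, hnu⟩ := hmiss u hu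
      rw [hms, ← hns]
      refine card_le_card fun w hw => ?_
      simp only [mem_filter] at hw
      exact cov n hn hns u hu w hw.1 hw.2.1 hnu
    · simp [hu]
  have b2 : ((W ×ˢ W).filter fun p => A p.1 p.2 ∧ m p.1 = p.1).card ≤ s := by
    rw [← hms]
    refine card_le_card_of_injOn Prod.snd ?_ ?_
    · rintro ⟨u, w⟩ h
      simp only [coe_filter, mem_product, Set.mem_ofPred_eq] at h
      exact cov m hm hms u h.1.1 w h.1.2 h.2.1 h.2.2
    · rintro ⟨u, w⟩ h ⟨u', w'⟩ h' hww
      simp only [coe_filter, mem_product, Set.mem_ofPred_eq] at h h' hww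
      subst hww
      by_contra hne
      have huu : u ≠ u' := by rintro rfl; exact hne rfl
      obtain ⟨n, hn, hns, hnw⟩ := hmiss w h.1.2
      exact gallai_step hs hmax hm hms huu h.2.2 h'.2.2 h.1.2 h.1.1 h'.1.1
        (by rintro rfl; exact hirr _ h.2.1) (by rintro rfl; exact hirr _ h'.2.1)
        (hs _ _ h.2.1) (hs _ _ h'.2.1) _ n rfl hn hns hnw
  calc _ ≤ _ := card_le_card hsub
    _ ≤ _ := card_union_le _ _
    _ ≤ s * s + s := add_le_add b1 b2
    _ = _ := by ring

/-- The Cockayne–Lorimer bound: if in every color `i` all matchings inside `W` have at most `B i`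
edges, and `B i ≤ M`, then `W` has at most `∑ B i + M + 1` vertices. -/
theorem cockayne_lorimer {ι : Type*} [Fintype ι] [DecidableEq ι] (c : V → V → ι)
    (hc : ∀ x y, c x y = c y x) (M : ℕ) :
    ∀ (t : ℕ) (W : Finset V), W.card = t → ∀ B : ι → ℕ, (∀ i, B i ≤ M) →
      (∀ i m, IsMat (fun x y => x ≠ y ∧ c x y = i) W m → (covered m).card ≤ 2 * B i) →
      t ≤ ∑ i, B i + M + 1 := by
  intro t
  induction t with
  | zero => intros; omega
  | succ t ih =>
  intro W hW B hB hmax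
  by_cases hcase : ∃ i, ∃ w ∈ W, 1 ≤ B i ∧
      ∀ m, IsMat (fun x y => x ≠ y ∧ c x y = i) W m → m w = w → (covered m).card ≤ 2 * (B i - 1)
  · -- deleting `w` lowers both the number of vertices and the bound for color `i` by one
    obtain ⟨i, w, hw, hBi, hle⟩ := hcase
    have h := ih (W.erase w) (by rw [card_erase_of_mem hw]; omega)
      (Function.update B i (B i - 1)) ?_ ?_
    · have e : ∑ j, Function.update B i (B i - 1) j + 1 = ∑ j, B j := by
        rw [sum_update_of_mem (mem_univ i), ← add_sum_erase univ B (mem_univ i),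
          sdiff_singleton_eq_erase]
        omega
      omega
    · intro j
      by_cases hj : j = i
      · subst hj; have := hB j; simp; omega
      · simpa [hj] using hB j
    · intro j m hm
      have hm' : IsMat (fun x y => x ≠ y ∧ c x y = j) W m :=
        ⟨hm.inv, fun v hv => ⟨mem_of_mem_erase (hm.adj v hv).1, (hm.adj v hv).2⟩⟩
      by_cases hj : j = i
      · subst hj
        simp only [Function.update_self]
        refine hle m hm' ?_
        by_contra h
        exact (notMem_erase w W) (hm.adj w h).1
      · simpa [hj] using hmax j m hm'
  · push Not at hcase
    have hb : ∀ i, ((W ×ˢ W).filter fun p => p.1 ≠ p.2 ∧ c p.1 p.2 = i).card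
        ≤ 2 * B i * (2 * M + 1) := by
      intro i
      refine (edge_bound (A := fun x y => x ≠ y ∧ c x y = i) (s := 2 * B i) ?_ ?_ (hmax i) ?_).trans
        ?_
      · intro x y h; exact ⟨h.1.symm, (hc y x).trans h.2⟩
      · intro x h; exact h.1 rfl
      · intro w hw
        rcases Nat.eq_zero_or_pos (B i) with h0 | hpos
        · exact ⟨id, ⟨fun _ => rfl, fun v hv => absurd rfl hv⟩, by simp [covered, h0], rfl⟩
        · obtain ⟨m, hm, hmw, hlt⟩ := hcase i w hw hpos
          refine ⟨m, hm, ?_, hmw⟩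
          obtain ⟨r, hr⟩ := even_covered hm.inv
          have := hmax i m hm
          omega
      · have := hB i
        gcongr
    have hsum : W.offDiag.card ≤ ∑ i, 2 * B i * (2 * M + 1) := by
      calc W.offDiag.card
          = ∑ i, (W.offDiag.filter fun p => c p.1 p.2 = i).card :=
            card_eq_sum_card_fiberwise (fun _ _ => mem_coe.2 (mem_univ _))
        _ ≤ _ := sum_le_sum fun i _ => le_trans (card_le_card fun p hp => ?_) (hb i)
      simp only [mem_filter, mem_offDiag, mem_product] at hp ⊢
      tauto
    rw [offDiag_card, hW, ← sum_mul, ← mul_sum] at hsum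
    generalize ∑ i, B i = S at *
    have h2 : (t + 1) * (t + 1) - (t + 1) = (t + 1) * t := by
      rw [Nat.sub_eq_iff_eq_add (by nlinarith)]; ring
    rw [h2] at hsum
    by_contra hlt
    push Not at hlt
    -- with `t = S + M + 1 + r` the difference of the two sides exceeds `(S - M)²`
    obtain ⟨r, rfl⟩ := Nat.exists_eq_add_of_le (show S + M + 1 ≤ t by omega)
    zify at hsum
    nlinarith [sq_nonneg ((S : ℤ) - M)]

/-- A matching covering more than six vertices contains four disjoint edges. -/
theorem exists_four {m : V → V} (hi : ∀ v, m (m v) = v) (h : 6 < (covered m).card) :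
    ∃ f : Fin 8 → V, Function.Injective f ∧ (∀ v, m (f v) ≠ f v) ∧
      ∀ u v : Fin 8, u ≠ v → (u : ℕ) / 2 = v / 2 → f v = m (f u) := by
  have pick : ∀ T : Finset V, T.card ≤ 6 → ∃ a, m a ≠ a ∧ a ∉ T := by
    intro T hT
    obtain ⟨a, ha, hb⟩ := exists_mem_notMem_of_card_lt_card (lt_of_le_of_lt hT h)
    exact ⟨a, mem_covered.1 ha, hb⟩
  obtain ⟨a, ha, -⟩ := pick ∅ (by simp)
  obtain ⟨b, hb, hb'⟩ := pick {a, m a} (card_le_two.trans (by norm_num))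
  obtain ⟨d, hd, hd'⟩ := pick {a, m a, b, m b} (card_le_four.trans (by norm_num))
  obtain ⟨e, he, he'⟩ := pick {a, m a, b, m b, d, m d} card_le_six
  simp only [mem_insert, mem_singleton, not_or] at hb' hd' he'
  refine ⟨![a, m a, b, m b, d, m d, e, m e], ?_, ?_, ?_⟩
  · have hinj : ∀ x y, m x = m y → x = y := fun x y h => by rw [← hi x, h, hi]
    have : (List.ofFn ![a, m a, b, m b, d, m d, e, m e]).Nodup := by
      simp [List.ofFn_succ]
      grind
    exact List.nodup_ofFn.1 this
  · intro v; fin_cases v <;> simp [hi] <;> grind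
  · intro u v huv h
    fin_cases u <;> fin_cases v <;> simp_all
end

theorem upper_bound (k : ℕ) :
    GallaiRamseyProp (fun _ : Fin k =>
      (⟨2 * 4, matchingGraph 4⟩ : Σ V : ℕ, SimpleGraph (Fin V))) (3 * k + 5) := by
  intro c _
  by_contra hno
  have h := cockayne_lorimer (fun x y => c s(x, y)) (fun x y => by rw [Sym2.eq_swap]) 3
    (3 * k + 5) Finset.univ (by simp) (fun _ => 3) (fun _ => le_rfl) ?_
  · simp at h; omega
  · intro i m hm
    by_contra hlt
    obtain ⟨f, hf, hmf, hfm⟩ := exists_four hm.inv (by omega)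
    refine hno ⟨i, f, hf, fun u v huv => ?_⟩
    simp only [matchingGraph, SimpleGraph.fromRel_adj] at huv
    have e := hfm u v huv.1 (by omega)
    rw [e]
    exact (hm.adj _ (hmf u)).2.2

/-- On at most `3k + 4` vertices, put the first seven vertices at level `0` and each subsequent
triple at the next level; an edge is colored by the larger level of its ends. -/
theorem lower_bound (k N : ℕ) (hk : 1 ≤ k) (hN : N < 3 * k + 5) :
    ¬ GallaiRamseyProp (fun _ : Fin k =>
      (⟨2 * 4, matchingGraph 4⟩ : Σ V : ℕ, SimpleGraph (Fin V))) N := by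
  intro h
  -- truncated subtraction sends all of `0, …, 6` to level `0`
  obtain ⟨i, f, hf, hfc⟩ := h (Sym2.lift ⟨fun x y =>
    ⟨max (((x : ℕ) - 4) / 3) (((y : ℕ) - 4) / 3), by have := x.2; have := y.2; omega⟩,
    fun x y => by simp [max_comm]⟩) (by
      intro x y z _ _ _
      simp only [Sym2.lift_mk, Fin.mk.injEq]
      omega)
  change Fin 8 → Fin N at f
  have hadj : ∀ u v : Fin 8, u ≠ v → (u : ℕ) / 2 = v / 2 →
      max (((f u : ℕ) - 4) / 3) (((f v : ℕ) - 4) / 3) = i := by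
    intro u v huv h
    have := hfc u v (by simp only [matchingGraph, SimpleGraph.fromRel_adj]; exact ⟨huv, Or.inl h⟩)
    simpa [Fin.ext_iff] using this
  have hinj : ∀ u v : Fin 8, (f u : ℕ) = f v → u = v := fun u v h => hf (Fin.ext h)
  rcases Nat.eq_zero_or_pos (i : ℕ) with h0 | hpos
  · have hlt : ∀ u : Fin 8, (f u : ℕ) < 7 := by
      intro u
      obtain ⟨v, hv, huv⟩ : ∃ v : Fin 8, u ≠ v ∧ (u : ℕ) / 2 = v / 2 := by
        revert u; decide
      have := hadj u v hv huv
      omega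
    have := Fintype.card_le_of_injective (fun u : Fin 8 => (⟨f u, hlt u⟩ : Fin 7))
      (fun u v h => hinj u v (by simpa using h))
    simp at this
  · -- every edge of color `i` has an end in the triple at level `i`
    have hex : ∀ j : Fin 4, ∃ u : Fin 8, (u : ℕ) / 2 = j ∧ ((f u : ℕ) - 4) / 3 = i := by
      intro j
      have := hadj (⟨2 * j, by omega⟩ : Fin 8) (⟨2 * j + 1, by omega⟩ : Fin 8) (by simp)
        (by simp; omega)
      rcases max_choice (((f (⟨2 * j, by omega⟩ : Fin 8) : ℕ) - 4) / 3)
        (((f (⟨2 * j + 1, by omega⟩ : Fin 8) : ℕ) - 4) / 3) with h | h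
      · exact ⟨_, by simp, h.symm.trans this⟩
      · exact ⟨⟨2 * j + 1, by omega⟩, by simp; omega, h.symm.trans this⟩
    choose g hg hgi using hex
    have := Fintype.card_le_of_injective
      (fun j : Fin 4 => (⟨(f (g j) : ℕ) - (3 * i + 4), by have := hgi j; omega⟩ : Fin 3)) (by
        intro j j' h
        have e : g j = g j' := hinj _ _ (by
          have h1 := hgi j
          have h2 := hgi j'
          simp only [Fin.mk.injEq] at h
          omega)
        have := hg j
        have := hg j'
        rw [e] at *
        omega)
    simp at this

/-- GR_k(M₄) = 3k + 5. -/
theorem stmt_13 (k : ℕ) (hk : 1 ≤ k) :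
    IsLeast {N | 0 < N ∧
      GallaiRamseyProp (fun _ : Fin k => (⟨2 * 4, matchingGraph 4⟩ : Σ V : ℕ, SimpleGraph (Fin V))) N} (3 * k + 5) := by
  refine ⟨⟨by omega, upper_bound k⟩, fun N hN => ?_⟩
  by_contra hlt
  exact lower_bound k N hk (by omega) hN.2
end

section
/- For all integers n ≥ 3 and k ≥ 1, GR_k(P_{2n}) ≥ (n−1)k + n + 1. -/
/-- The level of the vertex `v`. The truncated subtraction puts the vertices `0, …, 2n - 2` in
level `0`, and each later level consists of `n - 1` consecutive vertices. -/
def level (n v : ℕ) : ℕ := (v - n) / (n - 1)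

lemma level_lt {n k v : ℕ} (hn : 3 ≤ n) (hk : 1 ≤ k) (hv : v < (n - 1) * k + n) :
    level n v < k := by
  have h : 0 < (n - 1) * k := Nat.mul_pos (by omega) hk
  exact Nat.div_lt_of_lt_mul (by omega)

/-- The coloring giving an edge the larger of the levels of its ends. -/
def levelColoring (n : ℕ) {N k : ℕ} (h : ∀ v : Fin N, level n v < k) :
    Sym2 (Fin N) → Fin k :=
  Sym2.lift ⟨fun a b => ⟨max (level n a) (level n b), max_lt (h a) (h b)⟩,
    fun a b => by simp only [max_comm]⟩

lemma levelColoring_val (n : ℕ) {N k : ℕ} (h : ∀ v : Fin N, level n v < k) (a b : Fin N) :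
    (levelColoring n h s(a, b) : ℕ) = max (level n a) (level n b) := rfl

lemma levelColoring_isGallai (n : ℕ) {N k : ℕ} (h : ∀ v : Fin N, level n v < k) :
    IsGallai (levelColoring n h) := by
  intro x y z _ _ _
  simp only [Fin.ext_iff, levelColoring_val]
  omega

lemma levelColoring_no_path {n N k : ℕ} (hn : 3 ≤ n) (h : ∀ v : Fin N, level n v < k)
    (i : Fin k) : ¬ HasMonoCopy (levelColoring n h) (SimpleGraph.pathGraph (2 * n)) i := by
  rintro ⟨f, hf, hc⟩
  have hmax : ∀ u v : Fin (2 * n), u.val + 1 = v.val →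
      max (level n (f u)) (level n (f v)) = i := by
    intro u v huv
    rw [← levelColoring_val n h, hc u v (SimpleGraph.pathGraph_adj.2 (Or.inl huv))]
  rcases Nat.eq_zero_or_pos i.val with hi | hi
  · have hlt : ∀ u : Fin (2 * n), (f u).val < 2 * n - 1 := by
      intro u
      have h0 : level n (f u) = 0 := by
        by_cases hu : u.val + 1 < 2 * n
        · have := hmax u ⟨u.val + 1, hu⟩ rfl
          omega
        · have := hmax ⟨u.val - 1, by omega⟩ u (by simp only; omega)
          omega
      have := (Nat.div_eq_zero_iff_lt (by omega)).1 h0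
      omega
    have := Fintype.card_le_of_injective
      (fun u : Fin (2 * n) => (⟨(f u).val, hlt u⟩ : Fin (2 * n - 1)))
      (fun u v huv => hf (Fin.ext (by simpa using huv)))
    simp only [Fintype.card_fin] at this
    omega
  · have hex : ∀ j : Fin n, ∃ u : Fin (2 * n), u.val / 2 = j ∧ level n (f u) = i := by
      intro j
      have := hmax ⟨2 * j, by omega⟩ ⟨2 * j + 1, by omega⟩ rfl
      rcases max_choice (level n (f ⟨2 * j, by omega⟩)) (level n (f ⟨2 * j + 1, by omega⟩))
        with h' | h'
      · exact ⟨_, by simp only; omega, h'.symm.trans this⟩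
      · exact ⟨_, by simp only; omega, h'.symm.trans this⟩
    choose g hg hgl using hex
    -- Division with remainder by `n - 1` identifies a vertex of level `i > 0` by its remainder.
    have hrec : ∀ j : Fin n,
        (f (g j)).val = n + (n - 1) * i + ((f (g j)).val - n) % (n - 1) := by
      intro j
      have h1 := Nat.div_add_mod ((f (g j)).val - n) (n - 1)
      have h2 : ((f (g j)).val - n) / (n - 1) = i := hgl j
      rw [h2] at h1
      have h3 : 0 < (n - 1) * i.val := Nat.mul_pos (by omega) hi
      omega
    have := Fintype.card_le_of_injective
      (fun j : Fin n =>
        (⟨((f (g j)).val - n) % (n - 1), Nat.mod_lt _ (by omega)⟩ : Fin (n - 1)))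
      (fun j l hjl => by
        have hjl' := Fin.ext_iff.1 hjl
        simp only at hjl'
        have hv : (f (g j)).val = (f (g l)).val := by rw [hrec j, hrec l, hjl']
        have hgg := hf (Fin.ext hv)
        exact Fin.ext (by rw [← hg j, ← hg l, hgg]))
    simp only [Fintype.card_fin] at this
    omega

/-- GR_k(P_{2n}) ≥ (n-1)k + n + 1 for n ≥ 3, k ≥ 1. -/
theorem stmt_14 (n k : ℕ) (hn : 3 ≤ n) (hk : 1 ≤ k) :
    ∀ N : ℕ, 0 < N →
      GallaiRamseyProp
        (fun _ : Fin k => (⟨2 * n, SimpleGraph.pathGraph (2 * n)⟩ : Σ V : ℕ, SimpleGraph (Fin V)))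
        N →
      (n - 1) * k + n + 1 ≤ N := by
  intro N _ hG
  by_contra hlt
  have h : ∀ v : Fin N, level n v < k := fun v => level_lt hn hk (by omega)
  obtain ⟨i, hi⟩ := hG _ (levelColoring_isGallai n h)
  exact levelColoring_no_path hn h i hi
end

section
/- For all integers n ≥ 3 and k ≥ 1, GR_k(M_n) ≥ (n−1)k + n + 1, where M_n is a matching of size n. -/
/-- The number of the block containing the vertex `v`: block `0` is `{0, …, 2 * n - 2}` and every
later block consists of the next `n - 1` integers. Truncated subtraction puts the vertices below
`n` into block `0`. -/
def blockIndex (n v : ℕ) : ℕ := (v - n) / (n - 1)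

lemma blockIndex_lt {n k v : ℕ} (hn : 3 ≤ n) (hk : 1 ≤ k) (hv : v < (n - 1) * k + n) :
    blockIndex n v < k := by
  have h0 : 0 < (n - 1) * k := Nat.mul_pos (by omega) hk
  exact Nat.div_lt_of_lt_mul (by omega)

/-- The coloring of the edges by the block of their larger endpoint. -/
def blockColoring (n k N : ℕ) (hn : 3 ≤ n) (hk : 1 ≤ k) (hN : N ≤ (n - 1) * k + n)
    (e : Sym2 (Fin N)) : Fin k :=
  ⟨blockIndex n e.sup, blockIndex_lt hn hk (e.sup.isLt.trans_le hN)⟩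

lemma blockColoring_isGallai {n k N : ℕ} (hn : 3 ≤ n) (hk : 1 ≤ k)
    (hN : N ≤ (n - 1) * k + n) : IsGallai (blockColoring n k N hn hk hN) := by
  intro x y z _ _ _
  have key : x ⊔ y = y ⊔ z ∨ y ⊔ z = x ⊔ z ∨ x ⊔ y = x ⊔ z := by
    rcases le_total x y with h1 | h1 <;> rcases le_total y z with h2 | h2 <;>
      rcases le_total x z with h3 | h3 <;> simp [h1, h2, h3] <;> omega
  simp only [blockColoring, Fin.mk.injEq, Sym2.sup_mk]
  rcases key with h | h | h <;> simp [h]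

lemma blockColoring_not_hasMonoCopy {n k N : ℕ} (hn : 3 ≤ n) (hk : 1 ≤ k)
    (hN : N ≤ (n - 1) * k + n) (i : Fin k) :
    ¬ HasMonoCopy (blockColoring n k N hn hk hN) (matchingGraph n) i := by
  rintro ⟨f, hf, hc⟩
  let a : Fin n → Fin (2 * n) := fun j => ⟨2 * j, by omega⟩
  let b : Fin n → Fin (2 * n) := fun j => ⟨2 * j + 1, by omega⟩
  have hblock : ∀ j, blockIndex n (f (a j) ⊔ f (b j) : Fin N) = i := by
    intro j
    have hadj : (matchingGraph n).Adj (a j) (b j) := by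
      simp only [matchingGraph, SimpleGraph.fromRel_adj, a, b, ne_eq, Fin.mk.injEq]
      omega
    have := congrArg Fin.val (hc _ _ hadj)
    simpa [blockColoring] using this
  by_cases hi : (i : ℕ) = 0
  · have hlt : ∀ v, (f v : ℕ) < 2 * n - 1 := by
      intro v
      have hv := hblock ⟨v / 2, by omega⟩
      have hle : f v ≤ f (a ⟨v / 2, by omega⟩) ⊔ f (b ⟨v / 2, by omega⟩) := by
        rcases Nat.mod_two_eq_zero_or_one v with h | h
        · have : v = a ⟨v / 2, by omega⟩ := by
            ext; simp only [a]; omega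
          exact (congrArg f this).le.trans le_sup_left
        · have : v = b ⟨v / 2, by omega⟩ := by
            ext; simp only [b]; omega
          exact (congrArg f this).le.trans le_sup_right
      rw [hi, blockIndex, Nat.div_eq_zero_iff] at hv
      have hle' := Fin.le_def.mp hle
      omega
    have := Fintype.card_le_of_injective (fun v => (⟨f v, hlt v⟩ : Fin (2 * n - 1)))
      (fun u v h => hf (Fin.ext (by simpa using h)))
    simp only [Fintype.card_fin] at this
    omega
  · have hmem : ∀ j, n + (n - 1) * i ≤ (f (a j) ⊔ f (b j) : Fin N) ∧
        ((f (a j) ⊔ f (b j) : Fin N) : ℕ) - (n + (n - 1) * i) < n - 1 := by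
      intro j
      have hj := hblock j
      have hpos : 0 < (n - 1) * (i : ℕ) := Nat.mul_pos (by omega) (by omega)
      rw [blockIndex, Nat.div_eq_iff (by omega), mul_comm] at hj
      omega
    have hinj : Function.Injective (fun j =>
        (⟨((f (a j) ⊔ f (b j) : Fin N) : ℕ) - (n + (n - 1) * i), (hmem j).2⟩ :
          Fin (n - 1))) := by
      intro j l h
      have h1 := (hmem j).1
      have h2 := (hmem l).1
      simp only [Fin.mk.injEq] at h
      have heq : f (a j) ⊔ f (b j) = f (a l) ⊔ f (b l) := Fin.ext (by omega)
      -- Equal larger endpoints force equal indices, because `f` is injective.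
      have hjl : a j = a l ∨ a j = b l ∨ b j = a l ∨ b j = b l := by
        rcases max_choice (f (a j)) (f (b j)) with p | p <;>
          rcases max_choice (f (a l)) (f (b l)) with q | q <;>
          rw [p, q] at heq <;> have := hf heq <;> tauto
      simp only [a, b, Fin.mk.injEq] at hjl
      ext
      omega
    have := Fintype.card_le_of_injective _ hinj
    simp only [Fintype.card_fin] at this
    omega

/-- GR_k(M_n) ≥ (n-1)k + n + 1 for n ≥ 3, k ≥ 1. -/
theorem stmt_15 (n k : ℕ) (hn : 3 ≤ n) (hk : 1 ≤ k) :
    ∀ N : ℕ, 0 < N →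
      GallaiRamseyProp
        (fun _ : Fin k => (⟨2 * n, matchingGraph n⟩ : Σ V : ℕ, SimpleGraph (Fin V))) N →
      (n - 1) * k + n + 1 ≤ N := by
  intro N _ h
  by_contra hlt
  have hN : N ≤ (n - 1) * k + n := by omega
  obtain ⟨i, hi⟩ := h _ (blockColoring_isGallai hn hk hN)
  exact blockColoring_not_hasMonoCopy hn hk hN i hi
end

section
/- Let the edges of a complete bipartite graph with parts B and R, where |B| ≥ 4 and |R| ≥ 3, be colored with two colors, red and blue. If there is no blue path on 5 vertices with both endpoints in B and no red path on 5 vertices with both endpoints in R, then every vertex of B is incident to at most 2 red edges. -/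
/-!
Suppose `b` is red to three vertices `r₁, r₂, r₃` of `R`. A vertex `c ≠ b` that is red to two of
them would give a red path `x - b - y - c - z` through all three, so every such `c` is blue to at
least two of the `rᵢ`. There are three vertices `c₁, c₂, c₃` of `B` other than `b`, and between
them and the `rᵢ` each `cⱼ` misses at most one blue edge. This forces a blue path on five vertices
whose endpoints and middle vertex are the `cⱼ`, a contradiction.
-/


/-- In a 2-colored (blue = `true`, red = `false`) complete bipartite graph with parts `B`
(with `|B| ≥ 4`) and `R` (with `|R| ≥ 3`), if there is no blue path on 5 vertices with both
endpoints in `B` and no red path on 5 vertices with both endpoints in `R`, then every vertex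
of `B` is incident to at most 2 red edges. -/
theorem stmt_16 {B R : Type} [Fintype B] [Fintype R] [DecidableEq R]
    (hB : 4 ≤ Fintype.card B) (hR : 3 ≤ Fintype.card R)
    (blue : B → R → Bool)
    (hnoblue : ¬ ∃ (b₁ b₂ b₃ : B) (r₁ r₂ : R),
      b₁ ≠ b₂ ∧ b₁ ≠ b₃ ∧ b₂ ≠ b₃ ∧ r₁ ≠ r₂ ∧
      blue b₁ r₁ = true ∧ blue b₂ r₁ = true ∧ blue b₂ r₂ = true ∧ blue b₃ r₂ = true)
    (hnored : ¬ ∃ (r₁ r₂ r₃ : R) (b₁ b₂ : B),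
      r₁ ≠ r₂ ∧ r₁ ≠ r₃ ∧ r₂ ≠ r₃ ∧ b₁ ≠ b₂ ∧
      blue b₁ r₁ = false ∧ blue b₁ r₂ = false ∧ blue b₂ r₂ = false ∧ blue b₂ r₃ = false) :
    ∀ b : B, (Finset.univ.filter fun r : R => blue b r = false).card ≤ 2 := by
  classical
  intro b
  by_contra! hb
  obtain ⟨r₁, h₁, r₂, h₂, r₃, h₃, h₁₂, h₁₃, h₂₃⟩ := Finset.two_lt_card.1 hb
  simp only [Finset.mem_filter, Finset.mem_univ, true_and] at h₁ h₂ h₃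
  have hB' : 2 < (Finset.univ.erase b).card := by
    rw [Finset.card_erase_of_mem (Finset.mem_univ b), Finset.card_univ]
    omega
  obtain ⟨c₁, hc₁, c₂, hc₂, c₃, hc₃, hc₁₂, hc₁₃, hc₂₃⟩ := Finset.two_lt_card.1 hB'
  -- If `c` were red to `y` and `z`, then `x - b - y - c - z` would be a red path.
  have pair : ∀ c ∈ Finset.univ.erase b, ∀ x y z : R, x ≠ y → x ≠ z → y ≠ z →
      blue b x = false → blue b y = false → blue c y = true ∨ blue c z = true := by
    intro c hc x y z hxy hxz hyz hx hy
    by_contra! h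
    simp only [ne_eq, Bool.not_eq_true] at h
    exact hnored ⟨x, y, z, b, c, hxy, hxz, hyz, (Finset.ne_of_mem_erase hc).symm,
      hx, hy, h.1, h.2⟩
  have most : ∀ c ∈ Finset.univ.erase b,
      (blue c r₁ = true ∨ blue c r₂ = true) ∧ (blue c r₁ = true ∨ blue c r₃ = true) ∧
      (blue c r₂ = true ∨ blue c r₃ = true) := fun c hc =>
    ⟨pair c hc r₃ r₁ r₂ h₁₃.symm h₂₃.symm h₁₂ h₃ h₁,
      pair c hc r₂ r₁ r₃ h₁₂.symm h₂₃ h₁₃ h₂ h₁,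
      pair c hc r₁ r₂ r₃ h₁₂ h₁₃ h₂₃ h₁ h₂⟩
  have m₁ := most c₁ hc₁
  have m₂ := most c₂ hc₂
  have m₃ := most c₃ hc₃
  have path : ∀ (x y z : B) (r s : R), x ≠ y → x ≠ z → y ≠ z → r ≠ s →
      ¬ (blue x r = true ∧ blue y r = true ∧ blue y s = true ∧ blue z s = true) :=
    fun x y z r s hxy hxz hyz hrs h => hnoblue ⟨x, y, z, r, s, hxy, hxz, hyz, hrs, h⟩
  -- Paths with middle vertex `c₂` suffice unless `c₁` and `c₃` are red to the same `rᵢ` and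
  -- `c₂` is blue to it; in that case there is a path with middle vertex `c₁`.
  have p₁ := path c₁ c₂ c₃ r₁ r₂ hc₁₂ hc₁₃ hc₂₃ h₁₂
  have p₂ := path c₁ c₂ c₃ r₂ r₁ hc₁₂ hc₁₃ hc₂₃ h₁₂.symm
  have p₃ := path c₁ c₂ c₃ r₁ r₃ hc₁₂ hc₁₃ hc₂₃ h₁₃
  have p₄ := path c₁ c₂ c₃ r₃ r₁ hc₁₂ hc₁₃ hc₂₃ h₁₃.symm
  have p₅ := path c₁ c₂ c₃ r₂ r₃ hc₁₂ hc₁₃ hc₂₃ h₂₃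
  have p₆ := path c₁ c₂ c₃ r₃ r₂ hc₁₂ hc₁₃ hc₂₃ h₂₃.symm
  have q₁ := path c₂ c₁ c₃ r₁ r₂ hc₁₂.symm hc₂₃ hc₁₃ h₁₂
  have q₂ := path c₂ c₁ c₃ r₂ r₁ hc₁₂.symm hc₂₃ hc₁₃ h₁₂.symm
  have q₃ := path c₂ c₁ c₃ r₁ r₃ hc₁₂.symm hc₂₃ hc₁₃ h₁₃
  have q₄ := path c₂ c₁ c₃ r₃ r₁ hc₁₂.symm hc₂₃ hc₁₃ h₁₃.symm
  have q₅ := path c₂ c₁ c₃ r₂ r₃ hc₁₂.symm hc₂₃ hc₁₃ h₂₃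
  have q₆ := path c₂ c₁ c₃ r₃ r₂ hc₁₂.symm hc₂₃ hc₁₃ h₂₃.symm
  clear path most pair hnoblue hnored
  grind
end

section
/- Let the edges of the complete bipartite graph with parts B and R, where |B| = |R| = 4, be colored with two colors, red and blue. If there is no blue path on 5 vertices with both endpoints in B and no red path on 5 vertices with both endpoints in R, then the blue edges form the vertex-disjoint union of two cycles of length 4 spanning B ∪ R, and likewise the red edges form the vertex-disjoint union of two cycles of length 4 spanning B ∪ R. -/
/-!
Write `d x` for the number of red neighbours of `x : B` and `e y` for the number of blue
neighbours of `y : R`. Two vertices of `B` with at least 3 and at least 2 red neighbours among the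
4 vertices of `R` share a red neighbour, and the remaining ones provide two distinct endpoints of
a red path (`no_large_pair`); the same holds for `R` and blue. So a vertex with `d ≥ 3` forces
`d ≤ 1` at the three others, hence `∑ d ≤ 7`; without such a vertex `∑ d ≤ 8` (`sum_le_eight`).
Likewise `∑ e ≤ 8`, and as the two sums count all 16 edges, both are equal to 8. A sum of 8
excludes a vertex with `d ≥ 3`, so all `d` and all `e` are equal to 2 (`all_eq_two`).

Thus the blue graph is 2-regular. If `b₁` has blue neighbours `r₁`, `r₂` then the second blue
neighbours of `r₁` and of `r₂` agree, since otherwise they are the ends of a blue path centred at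
`b₁`. This closes a blue 4-cycle, and regularity determines all remaining colours.
-/

/-- In a bipartite relation with a side `Y` of size 4, two vertices of `X` of degrees at least 3
and at least 2 are the second and fourth vertices of a path on 5 vertices. -/
theorem no_large_pair {X Y : Type} [Fintype Y] (hY : Fintype.card Y = 4)
    (p : X → Y → Bool)
    (hp : ¬ ∃ (y₁ y₂ y₃ : Y) (x₁ x₂ : X), y₁ ≠ y₂ ∧ y₁ ≠ y₃ ∧ y₂ ≠ y₃ ∧ x₁ ≠ x₂ ∧
      p x₁ y₁ = true ∧ p x₁ y₂ = true ∧ p x₂ y₂ = true ∧ p x₂ y₃ = true)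
    (x₁ x₂ : X) (hx : x₁ ≠ x₂)
    (h₁ : 3 ≤ (Finset.univ.filter fun y => p x₁ y = true).card)
    (h₂ : 2 ≤ (Finset.univ.filter fun y => p x₂ y = true).card) : False := by
  classical
  set S := Finset.univ.filter fun y => p x₁ y = true with hS
  set T := Finset.univ.filter fun y => p x₂ y = true with hT
  have hU : (S ∪ T).card ≤ 4 := hY ▸ Finset.card_le_univ _
  have hI := Finset.card_union_add_card_inter S T
  obtain ⟨y₂, hy₂⟩ := Finset.card_pos.mp (show 0 < (S ∩ T).card by omega)
  obtain ⟨y₃, hy₃, h32⟩ := Finset.exists_mem_ne (show 1 < T.card by omega) y₂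
  have hc : 0 < (S \ {y₂, y₃}).card := by
    have := Finset.le_card_sdiff {y₂, y₃} S
    have := Finset.card_le_two (a := y₂) (b := y₃)
    omega
  obtain ⟨y₁, hy₁⟩ := Finset.card_pos.mp hc
  simp [hS, hT] at hy₁ hy₂ hy₃
  exact hp ⟨y₁, y₂, y₃, x₁, x₂, hy₁.2.1, hy₁.2.2, h32.symm, hx, hy₁.1, hy₂.1, hy₂.2, hy₃⟩

/-- A degree of 3 or more forces the three other degrees to be at most 1, so the sum is at most
4 + 3. -/
theorem sum_le_seven {X : Type} [Fintype X] (hX : Fintype.card X = 4) (d : X → ℕ)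
    (h4 : ∀ x, d x ≤ 4) (hd : ∀ x y, x ≠ y → 3 ≤ d x → 2 ≤ d y → False)
    (x : X) (hx : 3 ≤ d x) : ∑ y, d y ≤ 7 := by
  classical
  rw [← Finset.add_sum_erase _ _ (Finset.mem_univ x)]
  have h : ∑ y ∈ Finset.univ.erase x, d y ≤ (Finset.univ.erase x).card • 1 := by
    refine Finset.sum_le_card_nsmul _ _ _ fun y hy => ?_
    by_contra hlt
    exact hd x y (Finset.ne_of_mem_erase hy).symm hx (by omega)
  rw [Finset.card_erase_of_mem (Finset.mem_univ x), Finset.card_univ, hX] at h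
  have := h4 x
  simp at h
  omega

theorem sum_le_eight {X : Type} [Fintype X] (hX : Fintype.card X = 4) (d : X → ℕ)
    (h4 : ∀ x, d x ≤ 4) (hd : ∀ x y, x ≠ y → 3 ≤ d x → 2 ≤ d y → False) : ∑ y, d y ≤ 8 := by
  by_cases h : ∃ x, 3 ≤ d x
  · obtain ⟨x, hx⟩ := h
    have := sum_le_seven hX d h4 hd x hx
    omega
  · push Not at h
    have := Finset.sum_le_card_nsmul Finset.univ d 2 fun x _ => by have := h x; omega
    rw [Finset.card_univ, hX] at this
    simpa using this

theorem all_eq_two {X : Type} [Fintype X] (hX : Fintype.card X = 4) (d : X → ℕ)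
    (h4 : ∀ x, d x ≤ 4) (hd : ∀ x y, x ≠ y → 3 ≤ d x → 2 ≤ d y → False)
    (hs : ∑ y, d y = 8) (x : X) : d x = 2 := by
  have h2 : ∀ x ∈ Finset.univ, d x ≤ 2 := fun x _ => by
    by_contra hlt
    have := sum_le_seven hX d h4 hd x (by omega)
    omega
  have hs' : ∑ y, d y = ∑ _y : X, 2 := by
    rw [hs, Finset.sum_const, Finset.card_univ, hX]; rfl
  exact (Finset.sum_eq_sum_iff_of_le h2).mp hs' x (Finset.mem_univ x)

/-- A duplicate-free pair in a type of size 4 extends to an enumeration. -/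
theorem exists_completion {X : Type} [Fintype X] (hX : Fintype.card X = 4) (a b : X)
    (hab : a ≠ b) : ∃ c e : X, [a, b, c, e].Nodup ∧ ∀ x, x = a ∨ x = b ∨ x = c ∨ x = e := by
  classical
  have hc : (({a, b} : Finset X)ᶜ).card = 2 := by
    rw [Finset.card_compl, hX, Finset.card_pair hab]
  obtain ⟨c, e, hce, h⟩ := Finset.card_eq_two.mp hc
  have hm : ∀ x, (¬ (x = a ∨ x = b)) ↔ (x = c ∨ x = e) := fun x => by
    have := Finset.ext_iff.mp h x
    simpa using this
  refine ⟨c, e, ?_, fun x => ?_⟩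
  · have h1 := (hm c).mpr (Or.inl rfl)
    have h2 := (hm e).mpr (Or.inr rfl)
    simp
    grind
  · have := hm x
    tauto


/-- In a 2-colored (blue = `true`, red = `false`) complete bipartite graph with parts `B` and
`R` of size 4 each, if there is no blue path on 5 vertices with both endpoints in `B` and no
red path on 5 vertices with both endpoints in `R`, then the blue edges form a vertex-disjoint
union of two 4-cycles spanning `B ∪ R`, and likewise for the red edges. -/
theorem stmt_17 {B R : Type} [Fintype B] [Fintype R]
    (hB : Fintype.card B = 4) (hR : Fintype.card R = 4)
    (blue : B → R → Bool)
    (hnoblue : ¬ ∃ (b₁ b₂ b₃ : B) (r₁ r₂ : R),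
      b₁ ≠ b₂ ∧ b₁ ≠ b₃ ∧ b₂ ≠ b₃ ∧ r₁ ≠ r₂ ∧
      blue b₁ r₁ = true ∧ blue b₂ r₁ = true ∧ blue b₂ r₂ = true ∧ blue b₃ r₂ = true)
    (hnored : ¬ ∃ (r₁ r₂ r₃ : R) (b₁ b₂ : B),
      r₁ ≠ r₂ ∧ r₁ ≠ r₃ ∧ r₂ ≠ r₃ ∧ b₁ ≠ b₂ ∧
      blue b₁ r₁ = false ∧ blue b₁ r₂ = false ∧ blue b₂ r₂ = false ∧ blue b₂ r₃ = false) :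
    (∃ (b₁ b₂ b₃ b₄ : B) (r₁ r₂ r₃ r₄ : R),
      [b₁, b₂, b₃, b₄].Nodup ∧ [r₁, r₂, r₃, r₄].Nodup ∧
      (∀ x : B, x = b₁ ∨ x = b₂ ∨ x = b₃ ∨ x = b₄) ∧
      (∀ y : R, y = r₁ ∨ y = r₂ ∨ y = r₃ ∨ y = r₄) ∧
      (∀ (b : B) (r : R), blue b r = true ↔
        ((b = b₁ ∧ r = r₁) ∨ (b = b₂ ∧ r = r₁) ∨ (b = b₂ ∧ r = r₂) ∨ (b = b₁ ∧ r = r₂) ∨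
         (b = b₃ ∧ r = r₃) ∨ (b = b₄ ∧ r = r₃) ∨ (b = b₄ ∧ r = r₄) ∨ (b = b₃ ∧ r = r₄)))) ∧
    (∃ (b₁ b₂ b₃ b₄ : B) (r₁ r₂ r₃ r₄ : R),
      [b₁, b₂, b₃, b₄].Nodup ∧ [r₁, r₂, r₃, r₄].Nodup ∧
      (∀ x : B, x = b₁ ∨ x = b₂ ∨ x = b₃ ∨ x = b₄) ∧
      (∀ y : R, y = r₁ ∨ y = r₂ ∨ y = r₃ ∨ y = r₄) ∧
      (∀ (b : B) (r : R), blue b r = false ↔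
        ((b = b₁ ∧ r = r₁) ∨ (b = b₂ ∧ r = r₁) ∨ (b = b₂ ∧ r = r₂) ∨ (b = b₁ ∧ r = r₂) ∨
         (b = b₃ ∧ r = r₃) ∨ (b = b₄ ∧ r = r₃) ∨ (b = b₄ ∧ r = r₄) ∨ (b = b₃ ∧ r = r₄)))) := by
  classical
  set d : B → ℕ := fun b => (Finset.univ.filter fun r => (!blue b r) = true).card with hd
  set e : R → ℕ := fun r => (Finset.univ.filter fun b => blue b r = true).card with he
  have hd4 : ∀ b, d b ≤ 4 := fun b => hR ▸ Finset.card_le_univ _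
  have he4 : ∀ r, e r ≤ 4 := fun r => hB ▸ Finset.card_le_univ _
  have hdp : ∀ x y, x ≠ y → 3 ≤ d x → 2 ≤ d y → False :=
    no_large_pair hR (fun b r => !blue b r) (by simpa using hnored)
  have hep : ∀ x y, x ≠ y → 3 ≤ e x → 2 ≤ e y → False := by
    refine no_large_pair hB (fun r b => blue b r) ?_
    rintro ⟨b₁, b₂, b₃, r₁, r₂, h⟩
    exact hnoblue ⟨b₁, b₂, b₃, r₁, r₂, h⟩
  have hrow : ∀ b, (Finset.univ.filter fun r => blue b r = true).card + d b = 4 := fun b => by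
    have := Finset.card_filter_add_card_filter_not (s := Finset.univ) (fun r => blue b r = true)
    rw [Finset.card_univ, hR] at this
    simpa [hd] using this
  -- Double counting of the blue edges turns the row counts into a bound on both sums at once.
  have hsum : ∑ r, e r + ∑ b, d b = 16 := by
    have h1 : ∑ r, e r = ∑ b, (Finset.univ.filter fun r => blue b r = true).card := by
      simp only [he, Finset.card_filter]
      exact Finset.sum_comm
    rw [h1, ← Finset.sum_add_distrib, Finset.sum_congr rfl fun b _ => hrow b]
    simp [hB]
  have hds := sum_le_eight hB d hd4 hdp
  have hes := sum_le_eight hR e he4 hep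
  have hd2 := all_eq_two hB d hd4 hdp (by omega)
  have he2 := all_eq_two hR e he4 hep (by omega)
  have hbn : ∀ b, ∃ r r', r ≠ r' ∧ ∀ y, blue b y = true ↔ y = r ∨ y = r' := fun b => by
    have h := hrow b
    rw [hd2] at h
    obtain ⟨r, r', hne, hs⟩ := Finset.card_eq_two.mp (Nat.add_right_cancel (m := 2) h)
    exact ⟨r, r', hne, fun y => by simpa using Finset.ext_iff.mp hs y⟩
  have hrn : ∀ r, ∃ b b', b ≠ b' ∧ ∀ x, blue x r = true ↔ x = b ∨ x = b' := fun r => by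
    obtain ⟨b, b', hne, hs⟩ := Finset.card_eq_two.mp (he2 r)
    exact ⟨b, b', hne, fun y => by simpa using Finset.ext_iff.mp hs y⟩
  obtain ⟨b₁⟩ : Nonempty B := Fintype.card_pos_iff.mp (by omega)
  obtain ⟨r₁, r₂, hr12, hb1⟩ := hbn b₁
  have other : ∀ r, blue b₁ r = true → ∃ b, b₁ ≠ b ∧ ∀ x, blue x r = true ↔ x = b₁ ∨ x = b := by
    intro r hr
    obtain ⟨b, b', hne, h⟩ := hrn r
    rcases (h b₁).mp hr with rfl | rfl
    · exact ⟨b', hne, h⟩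
    · exact ⟨b, hne.symm, fun x => (h x).trans or_comm⟩
  have h11 : blue b₁ r₁ = true := (hb1 r₁).mpr (Or.inl rfl)
  have h12 : blue b₁ r₂ = true := (hb1 r₂).mpr (Or.inr rfl)
  obtain ⟨b₂, hb12, hr1⟩ := other r₁ h11
  obtain ⟨c, hbc, hr2⟩ := other r₂ h12
  obtain rfl : b₂ = c := by
    by_contra hne
    exact hnoblue ⟨b₂, b₁, c, r₁, r₂, hb12.symm, hne, hbc, hr12,
      (hr1 _).mpr (Or.inr rfl), h11, h12, (hr2 _).mpr (Or.inr rfl)⟩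
  have hb2 : ∀ y, blue b₂ y = true ↔ y = r₁ ∨ y = r₂ := by
    obtain ⟨s, s', hne, h⟩ := hbn b₂
    have := (h r₁).mp ((hr1 _).mpr (Or.inr rfl))
    have := (h r₂).mp ((hr2 _).mpr (Or.inr rfl))
    grind
  obtain ⟨b₃, b₄, hBn, hBe⟩ := exists_completion hB b₁ b₂ hb12
  obtain ⟨r₃, r₄, hRn, hRe⟩ := exists_completion hR r₁ r₂ hr12
  have hrest : ∀ b, b ≠ b₁ → b ≠ b₂ → ∀ y, blue b y = true ↔ y = r₃ ∨ y = r₄ := by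
    intro b h1 h2
    obtain ⟨s, s', hne, h⟩ := hbn b
    have := (h s).mpr (Or.inl rfl)
    have := (h s').mpr (Or.inr rfl)
    have := hRe s
    have := hRe s'
    have := hr1 b
    have := hr2 b
    simp at hRn
    grind
  -- The colour of an edge depends only on the halves of `B` and `R` in which its ends lie.
  have key : ∀ b r, blue b r = true ↔ ((b = b₁ ∨ b = b₂) ↔ (r = r₁ ∨ r = r₂)) := by
    intro b r
    have := hRe r
    simp at hRn
    by_cases h : b = b₁ ∨ b = b₂
    · rcases h with rfl | rfl
      · simp [hb1]
      · simp [hb2]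
    · push Not at h
      rw [hrest b h.1 h.2 r]
      grind
  have hBn' := hBn
  have hRn' := hRn
  simp at hBn' hRn'
  refine ⟨⟨b₁, b₂, b₃, b₄, r₁, r₂, r₃, r₄, hBn, hRn, hBe, hRe, fun b r => ?_⟩,
    ⟨b₁, b₂, b₃, b₄, r₃, r₄, r₁, r₂, hBn, by simp; grind, hBe, fun y => ?_, fun b r => ?_⟩⟩
  · rw [key]
    have := hBe b
    have := hRe r
    grind
  · have := hRe y
    tauto
  · rw [← Bool.not_eq_true, key]
    have := hBe b
    have := hRe r
    grind
end
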